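/- Fix an integer d ≥ 2 and δ ∈ (0,1). Let a^{jk} : ℝ² → ℝ (1 ≤ j,k ≤ d) be smooth functions of (t,x¹) only, with a^{jk} = a^{kj} and δ|θ|² ≤ Σ_{j,k=1}^d a^{jk}(t,x¹) θ^j θ^k ≤ δ⁻¹|θ|² for all (t,x¹) and θ ∈ ℝ^d. Let u : ℝ^{d+1} → ℝ be smooth with compact support, let λ ≥ 0, and set f = u_t + Σ_{j,k=1}^d a^{jk} u_{x^j x^k} − λu. Then there is a constant N = N(δ) such that for every ξ ∈ ℝ^{d-1}: ∫_{ℝ²} |ũ_t(t,x¹,ξ)|² dx¹dt + ∫_{ℝ²} |ũ_{x¹x¹}(t,x¹,ξ)|² dx¹dt + (|ξ|⁴ + λ²) ∫_{ℝ²} |ũ(t,x¹,ξ)|² dx¹dt + (|ξ|² + λ) ∫_{ℝ²} |ũ_{x¹}(t,x¹,ξ)|² dx¹dt ≤ N ∫_{ℝ²} |f̃(t,x¹,ξ)|² dx¹dt. -/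

import Mathlib

open MeasureTheory

/-- Partial derivative in `t` of a function on `ℝ^{d+1} = ℝ × (Fin d → ℝ)`. -/
noncomputable def pdt {d : ℕ} (u : ℝ × (Fin d → ℝ) → ℝ) : ℝ × (Fin d → ℝ) → ℝ :=
  fun p => fderiv ℝ u p (1, 0)

/-- Partial derivative in `x^j`. -/
noncomputable def pdx {d : ℕ} (j : Fin d) (u : ℝ × (Fin d → ℝ) → ℝ) :
    ℝ × (Fin d → ℝ) → ℝ :=
  fun p => fderiv ℝ u p (0, Pi.single j 1)

/-- Second partial derivative in `x^j, x^k`. -/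
noncomputable def pdxx {d : ℕ} (j k : Fin d) (u : ℝ × (Fin d → ℝ) → ℝ) :
    ℝ × (Fin d → ℝ) → ℝ :=
  pdx j (pdx k u)

/-- Partial Fourier transform in the variables `x' ∈ ℝ^{d-1}` (spatial dimension
`d = n+1`): `ṽ(t,x¹,ξ) = ∫_{ℝ^n} v(t,x¹,x') e^{−i ξ·x'} dx'`. -/
noncomputable def pFourier {n : ℕ} (v : ℝ × (Fin (n + 1) → ℝ) → ℝ)
    (t y : ℝ) (ξ : Fin n → ℝ) : ℂ :=
  ∫ x' : Fin n → ℝ,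
    (v (t, Fin.cons y x') : ℂ) * Complex.exp (-Complex.I * ((∑ j, ξ j * x' j : ℝ) : ℂ))

/-- `∂ũ/∂t`. -/
noncomputable def pFourierT {n : ℕ} (v : ℝ × (Fin (n + 1) → ℝ) → ℝ)
    (t y : ℝ) (ξ : Fin n → ℝ) : ℂ :=
  deriv (fun s => pFourier v s y ξ) t

/-- `∂ũ/∂x¹`. -/
noncomputable def pFourierX {n : ℕ} (v : ℝ × (Fin (n + 1) → ℝ) → ℝ)
    (t y : ℝ) (ξ : Fin n → ℝ) : ℂ :=
  deriv (fun z => pFourier v t z ξ) y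

/-- `∂²ũ/(∂x¹)²`. -/
noncomputable def pFourierXX {n : ℕ} (v : ℝ × (Fin (n + 1) → ℝ) → ℝ)
    (t y : ℝ) (ξ : Fin n → ℝ) : ℂ :=
  deriv (fun z => pFourierX v t z ξ) y

/-!
For fixed `ξ` the function `w = ũ(·, ξ)` of `(t, y) = (t, x¹)` solves
`w_t + a w_yy + 2 i b w_y - c w = f̃`, where ellipticity of the quadratic form at `(r, s ξ)` gives
`b² ≤ a (c - μ)` with `μ = δ |ξ|² + λ`. The main point is the bound of `μ² ∫ |w|²` by `∫ |f̃|²`,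
with no regularity of `a` in `t` or `y` to integrate by parts with.

By `b² ≤ a (c - μ)` the first-order term is absorbed when passing to `|w|` (Kato's inequality), so
`|w|` is a subsolution of the real equation `v_t + a v_yy - μ v + |f̃| = 0`. Both steps are done for
finite differences: `|w|` lies below the iterates of a monotone explicit Euler scheme, and pairing
one step of the scheme with the second difference of `v` (the only test function that needs no
derivative of `a`) bounds the iterates in `L²` on average. Letting the mesh tend to zero gives the
zeroth-order bound. The derivatives then follow from `∫ ⟪w_t, w_yy⟫ = 0` and interpolation.
-/

open Filter
open scoped RealInnerProductSpace Topology

section DiscreteEnergy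

variable {H : Type*} [NormedAddCommGroup H] [InnerProductSpace ℝ H]

/-- The discrete energy `m ‖v‖² + κ ‖S v - v‖²` of a vector `v`, where `S` plays the role of a
translation; it is the Lyapunov functional of the explicit scheme below. -/
noncomputable def diffEnergy (S : H →ₗᵢ[ℝ] H) (m κ : ℝ) (v : H) : ℝ :=
  m * ‖v‖ ^ 2 + κ * ‖S v - v‖ ^ 2

variable {S T σ : H →ₗᵢ[ℝ] H} {m κ : ℝ}

lemma diffEnergy_nonneg (hm : 0 ≤ m) (hκ : 0 ≤ κ) (v : H) : 0 ≤ diffEnergy S m κ v := by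
  unfold diffEnergy
  positivity

lemma diffEnergy_zero : diffEnergy S m κ (0 : H) = 0 := by
  simp [diffEnergy]

lemma diffEnergy_map (hσ : ∀ v, σ (S v) = S (σ v)) (v : H) :
    diffEnergy S m κ (σ v) = diffEnergy S m κ v := by
  rw [diffEnergy, diffEnergy, ← hσ, ← map_sub, σ.norm_map, σ.norm_map]

lemma inner_diff_diff (hST : ∀ v, S (T v) = v) (v w : H) :
    ⟪S v - v, S w - w⟫ = -⟪S v + T v - (2 : ℝ) • v, w⟫ := by
  have adjoint : ⟪T v, w⟫ = ⟪v, S w⟫ := by rw [← S.inner_map_map, hST]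
  simp only [inner_sub_left, inner_sub_right, inner_add_left, inner_smul_left, S.inner_map_map,
    adjoint, conj_trivial]
  ring

lemma diffEnergy_add_le (hST : ∀ v, S (T v) = v) (hκ : 0 ≤ κ) (v w : H) :
    diffEnergy S m κ (v + w) ≤ diffEnergy S m κ v + 2 * m * ⟪v, w⟫
      - 2 * κ * ⟪S v + T v - (2 : ℝ) • v, w⟫ + (m + 4 * κ) * ‖w‖ ^ 2 := by
  have diff_add : S (v + w) - (v + w) = (S v - v) + (S w - w) := by
    rw [map_add]; abel
  have norm_diff : ‖S w - w‖ ^ 2 ≤ 4 * ‖w‖ ^ 2 := by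
    have := norm_sub_le (S w) w
    rw [S.norm_map] at this
    nlinarith [norm_nonneg (S w - w)]
  rw [diffEnergy, diffEnergy, diff_add, norm_add_sq_real, norm_add_sq_real, inner_diff_diff hST]
  nlinarith [mul_le_mul_of_nonneg_left norm_diff hκ]

lemma norm_add_add_sq_le {E : Type*} [SeminormedAddCommGroup E] (x y z : E) :
    ‖x + y + z‖ ^ 2 ≤ 3 * (‖x‖ ^ 2 + ‖y‖ ^ 2 + ‖z‖ ^ 2) := by
  have := norm_add₃_le (a := x) (b := y) (c := z)
  nlinarith [norm_nonneg (x + y + z), sq_nonneg (‖x‖ - ‖y‖), sq_nonneg (‖y‖ - ‖z‖),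
    sq_nonneg (‖x‖ - ‖z‖)]

variable {D ρ : ℝ} {v p g : H}

/-- In the energy balance `V = m ‖v‖`, `y = D ρ ‖L v‖` and `G = ‖g‖`. -/
lemma energy_quadratic_form_le (hD : 1 ≤ D) (V y G : ℝ) (hy : 0 ≤ y) (hG : 0 ≤ G) :
    2 * V * (y + G) - 2 * V ^ 2 + 6 * (D ^ 2 * y * G - y ^ 2)
        + (y ^ 2 + V ^ 2 + G ^ 2) / 2
      ≤ -(V ^ 2 / 2) + 11 / 2 * D ^ 4 * G ^ 2 := by
  have hDsq : 1 ≤ D ^ 2 := one_le_pow₀ hD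
  have hyG : y * G ≤ D ^ 2 * (y * G) := le_mul_of_one_le_left (by positivity) hDsq
  have hGG : G ^ 2 ≤ D ^ 4 * G ^ 2 := le_mul_of_one_le_left (by positivity) (one_le_pow₀ hD)
  nlinarith [sq_nonneg (V - y - G), sq_nonneg (9 * y - 8 * D ^ 2 * G), sq_nonneg y]

/-- One step of the scheme `v ↦ σ (v + p - m v + g)`, where `p` stands for the elliptic term
`ρ a (S v + T v - 2 v)` with `D⁻¹ ≤ a ≤ D`. -/
lemma diffEnergy_step_le (hST : ∀ v, S (T v) = v) (hσ : ∀ v, σ (S v) = S (σ v))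
    (hD : 1 ≤ D) (hρ : 0 < ρ) (hm : 0 ≤ m) (hmesh : m + 12 * D ^ 3 * ρ ≤ 1 / 6)
    (hp_inner : ρ * D⁻¹ * ‖S v + T v - (2 : ℝ) • v‖ ^ 2 ≤ ⟪S v + T v - (2 : ℝ) • v, p⟫)
    (hp_norm : ‖p‖ ≤ ρ * D * ‖S v + T v - (2 : ℝ) • v‖) :
    m ^ 2 * ‖v‖ ^ 2 ≤ 2 * (diffEnergy S m (3 * D ^ 3 * ρ) v
      - diffEnergy S m (3 * D ^ 3 * ρ) (σ (v + (p - m • v + g)))) + 11 * D ^ 4 * ‖g‖ ^ 2 := by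
  have hκ : 0 ≤ 3 * D ^ 3 * ρ := by positivity
  set L := S v + T v - (2 : ℝ) • v
  set V := m * ‖v‖
  set y := ρ * D * ‖L‖ with hy
  have growth := diffEnergy_add_le (m := m) hST hκ v (p - m • v + g)
  have inner_L_v : ⟪L, v⟫ ≤ 0 := by
    rw [← neg_nonneg, ← inner_diff_diff hST]; exact real_inner_self_nonneg
  have damping : m * ⟪v, p - m • v + g⟫ ≤ V * (y + ‖g‖) - V ^ 2 := by
    rw [inner_add_right, inner_sub_right, inner_smul_right, real_inner_self_eq_norm_sq]
    have := real_inner_le_norm v p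
    have := real_inner_le_norm v g
    nlinarith [mul_le_mul_of_nonneg_left hp_norm (norm_nonneg v)]
  have dissipation : y ^ 2 - D ^ 2 * y * ‖g‖ ≤ D ^ 3 * ρ * ⟪L, p - m • v + g⟫ := by
    have coercive : y ^ 2 ≤ D ^ 3 * ρ * ⟪L, p⟫ := by
      calc y ^ 2 = D ^ 3 * ρ * (ρ * D⁻¹ * ‖L‖ ^ 2) := by rw [hy]; field_simp
        _ ≤ _ := by gcongr
    have cauchy : -(D ^ 2 * y * ‖g‖) ≤ D ^ 3 * ρ * ⟪L, g⟫ := by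
      calc -(D ^ 2 * y * ‖g‖) = D ^ 3 * ρ * -(‖L‖ * ‖g‖) := by rw [hy]; ring
        _ ≤ _ := by gcongr; exact neg_le_of_abs_le (abs_real_inner_le_norm L g)
    rw [inner_add_right, inner_sub_right, inner_smul_right]
    have : D ^ 3 * ρ * (m * ⟪L, v⟫) ≤ 0 :=
      mul_nonpos_of_nonneg_of_nonpos (by positivity) (mul_nonpos_of_nonneg_of_nonpos hm inner_L_v)
    linarith
  have increment : ‖p - m • v + g‖ ^ 2 ≤ 3 * (y ^ 2 + V ^ 2 + ‖g‖ ^ 2) := by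
    have := norm_add_add_sq_le p (-(m • v)) g
    rw [← sub_eq_add_neg, norm_neg, norm_smul, Real.norm_of_nonneg hm] at this
    nlinarith [pow_le_pow_left₀ (norm_nonneg p) hp_norm 2]
  have quadratic := energy_quadratic_form_le hD V y ‖g‖ (by positivity) (norm_nonneg g)
  rw [diffEnergy_map hσ]
  have := mul_le_mul hmesh increment (by positivity) (by norm_num)
  linarith [mul_pow m ‖v‖ 2]

lemma sum_norm_sq_le_of_diffEnergy_step {C : ℝ} (hm : 0 ≤ m) (hκ : 0 ≤ κ) {v : ℕ → H}
    (hv : v 0 = 0)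
    (hstep : ∀ k, m ^ 2 * ‖v k‖ ^ 2
      ≤ 2 * (diffEnergy S m κ (v k) - diffEnergy S m κ (v (k + 1))) + C) (K : ℕ) :
    m ^ 2 * ∑ k ∈ Finset.range K, ‖v k‖ ^ 2 ≤ K * C := by
  have total := Finset.sum_le_sum fun k (_ : k ∈ Finset.range K) => hstep k
  rw [Finset.sum_add_distrib, ← Finset.mul_sum, ← Finset.mul_sum,
    Finset.sum_range_sub' (fun k => diffEnergy S m κ (v k)), hv, diffEnergy_zero,
    Finset.sum_const, Finset.card_range, nsmul_eq_mul] at total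
  linarith [diffEnergy_nonneg (S := S) hm hκ (v K)]

end DiscreteEnergy

lemma le_of_sum_range_le_of_eventually_le {x : ℕ → ℝ} {b C : ℝ} (hx : ∀ k, 0 ≤ x k)
    (hsum : ∀ K : ℕ, ∑ k ∈ Finset.range K, x k ≤ K * C) (hb : ∀ᶠ k in atTop, b ≤ x k) :
    b ≤ C := by
  obtain ⟨k₀, hk₀⟩ := eventually_atTop.mp hb
  by_contra! hCb
  obtain ⟨j, hj⟩ := exists_nat_gt (k₀ * C / (b - C))
  have lower : j * b ≤ ∑ k ∈ Finset.range (k₀ + j), x k := by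
    rw [Finset.sum_range_add]
    have := Finset.card_nsmul_le_sum (Finset.range j) (fun i => x (k₀ + i)) b
      fun i _ => hk₀ _ (Nat.le_add_right _ _)
    rw [Finset.card_range, nsmul_eq_mul] at this
    exact this.trans (le_add_of_nonneg_left (Finset.sum_nonneg fun k _ => hx k))
  have upper := hsum (k₀ + j)
  rw [div_lt_iff₀ (sub_pos.mpr hCb)] at hj
  push_cast at upper
  linarith

lemma norm_toLp_sq {α : Type*} [MeasurableSpace α] {ν : Measure α} {v : α → ℝ}
    (hv : MemLp v 2 ν) : ‖hv.toLp v‖ ^ 2 = ∫ q, v q ^ 2 ∂ν := by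
  rw [← real_inner_self_eq_norm_sq, L2.inner_def]
  refine integral_congr_ae (hv.coeFn_toLp.mono fun q hq => ?_)
  simp only [hq, real_inner_self_eq_norm_sq, Real.norm_eq_abs, sq_abs]

section TranslateL2

variable {G : Type*} [AddCommGroup G] [MeasurableSpace G] [MeasurableAdd G] {ν : Measure G}
  [ν.IsAddRightInvariant]

/-- The translation `v ↦ v (· + z)` as an isometry of the real space `L²(ν)`. -/
noncomputable def translateL2 (ν : Measure G) [ν.IsAddRightInvariant] (z : G) :
    Lp ℝ 2 ν →ₗᵢ[ℝ] Lp ℝ 2 ν :=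
  Lp.compMeasurePreservingₗᵢ ℝ (· + z) (measurePreserving_add_right ν z)

lemma memLp_comp_add_right {v : G → ℝ} (hv : MemLp v 2 ν) (z : G) :
    MemLp (fun q => v (q + z)) 2 ν :=
  hv.comp_measurePreserving (measurePreserving_add_right ν z)

lemma translateL2_toLp {v : G → ℝ} (hv : MemLp v 2 ν) (z : G) :
    translateL2 ν z (hv.toLp v) = (memLp_comp_add_right hv z).toLp _ :=
  rfl

lemma translateL2_translateL2 (z z' : G) (v : Lp ℝ 2 ν) :
    translateL2 ν z (translateL2 ν z' v) = translateL2 ν (z + z') v := by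
  obtain ⟨v, hv, rfl⟩ : ∃ f, ∃ hf : MemLp f 2 ν, hf.toLp f = v :=
    ⟨v, Lp.memLp v, Lp.toLp_coeFn v _⟩
  simp only [translateL2_toLp, add_assoc]

lemma translateL2_zero (v : Lp ℝ 2 ν) : translateL2 ν 0 v = v := by
  obtain ⟨v, hv, rfl⟩ : ∃ f, ∃ hf : MemLp f 2 ν, hf.toLp f = v :=
    ⟨v, Lp.memLp v, Lp.toLp_coeFn v _⟩
  simp only [translateL2_toLp, add_zero]

end TranslateL2

section EulerScheme

/-- The unnormalised second difference with step `h` in the space variable. -/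
def secondDiff (h : ℝ) (v : ℝ × ℝ → ℝ) (q : ℝ × ℝ) : ℝ :=
  v (q + (0, h)) + v (q + (0, -h)) - 2 * v q

/-- The right-hand side of the explicit Euler discretisation, with space step `h` and time step
`τ`, of the backward equation `v_t + a v_yy - μ v + g = 0`. -/
noncomputable def eulerUpdate (h τ μ : ℝ) (a g v : ℝ × ℝ → ℝ) (q : ℝ × ℝ) : ℝ :=
  v q + (τ / h ^ 2 * a q * secondDiff h v q - τ * μ * v q + τ * g q)

/-- The iterates, started at `0`, of the Euler scheme for the backward equation
`v_t + a v_yy - μ v + g = 0`: every iteration carries the values at time `t + τ` to time `t`. -/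
noncomputable def eulerScheme (h τ μ : ℝ) (a g : ℝ × ℝ → ℝ) : ℕ → ℝ × ℝ → ℝ
  | 0 => 0
  | k + 1 => fun q => eulerUpdate h τ μ a g (eulerScheme h τ μ a g k) (q + (τ, 0))

variable {h τ μ R : ℝ} {a g v r : ℝ × ℝ → ℝ}

/-- Under the Courant–Friedrichs–Lewy condition all weights are nonnegative. -/
lemma eulerUpdate_mono (hτ : 0 ≤ τ) {q : ℝ × ℝ} (ha : 0 ≤ a q)
    (hcfl : 2 * (τ / h ^ 2 * a q) + τ * μ ≤ 1) {v w : ℝ × ℝ → ℝ} (hq : v q ≤ w q)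
    (hright : v (q + (0, h)) ≤ w (q + (0, h))) (hleft : v (q + (0, -h)) ≤ w (q + (0, -h))) :
    eulerUpdate h τ μ a g v q ≤ eulerUpdate h τ μ a g w q := by
  have weight : 0 ≤ τ / h ^ 2 * a q := by positivity
  unfold eulerUpdate secondDiff
  nlinarith [mul_le_mul_of_nonneg_left hright weight, mul_le_mul_of_nonneg_left hleft weight,
    mul_le_mul_of_nonneg_left hq (sub_nonneg.mpr hcfl)]

lemma eulerScheme_nonneg (hτ : 0 ≤ τ) (ha : ∀ q, 0 ≤ a q)
    (hcfl : ∀ q, 2 * (τ / h ^ 2 * a q) + τ * μ ≤ 1) (hg : ∀ q, 0 ≤ g q) (k : ℕ) (q : ℝ × ℝ) :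
    0 ≤ eulerScheme h τ μ a g k q := by
  induction k generalizing q with
  | zero => exact le_rfl
  | succ k ih =>
    have update_zero : 0 ≤ eulerUpdate h τ μ a g 0 (q + (τ, 0)) := by
      have := mul_nonneg hτ (hg (q + (τ, 0)))
      simpa [eulerUpdate, secondDiff] using this
    exact update_zero.trans (eulerUpdate_mono hτ (ha _) (hcfl _) (ih _) (ih _) (ih _))

lemma le_eulerScheme (hτ : 0 ≤ τ) (ha : ∀ q, 0 ≤ a q)
    (hcfl : ∀ q, 2 * (τ / h ^ 2 * a q) + τ * μ ≤ 1) (hg : ∀ q, 0 ≤ g q)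
    (hlate : ∀ q, R < q.1 → r q ≤ 0)
    (hr : ∀ q, r q ≤ max 0 (eulerUpdate h τ μ a g r (q + (τ, 0)))) (k : ℕ) (q : ℝ × ℝ)
    (hq : R < q.1 + k * τ) : r q ≤ eulerScheme h τ μ a g k q := by
  induction k generalizing q with
  | zero => exact hlate q (by simpa using hq)
  | succ k ih =>
    refine (hr q).trans (max_le (eulerScheme_nonneg hτ ha hcfl hg _ q) ?_)
    have later : R < (q + (τ, 0)).1 + k * τ := by push_cast at hq; simp; linarith
    exact eulerUpdate_mono hτ (ha _) (hcfl _) (ih _ later) (ih _ (by simpa using later))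
      (ih _ (by simpa using later))

lemma cfl_of_mesh_le {δ ρ m α : ℝ} (hδ : δ ∈ Set.Ioo (0 : ℝ) 1) (hρ : 0 ≤ ρ) (hα : α ≤ δ⁻¹)
    (hmesh : m + 12 * δ⁻¹ ^ 3 * ρ ≤ 1 / 6) : 2 * (ρ * α) + m ≤ 1 := by
  have hD : 1 ≤ δ⁻¹ := (one_le_inv₀ hδ.1).mpr hδ.2.le
  have hρα : ρ * α ≤ ρ * δ⁻¹ ^ 3 := by
    gcongr
    exact hα.trans (le_self_pow₀ hD three_ne_zero)
  have : 0 ≤ ρ * δ⁻¹ ^ 3 := by positivity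
  linarith

lemma eventually_le_eulerScheme (hτ : 0 < τ) (ha : ∀ q, 0 ≤ a q)
    (hcfl : ∀ q, 2 * (τ / h ^ 2 * a q) + τ * μ ≤ 1) (hg : ∀ q, 0 ≤ g q)
    (hr_supp : ∀ q, R < |q.1| → r q = 0)
    (hr : ∀ q, r q ≤ max 0 (eulerUpdate h τ μ a g r (q + (τ, 0)))) :
    ∀ᶠ k : ℕ in atTop, ∀ q, r q ≤ eulerScheme h τ μ a g k q := by
  obtain ⟨k₀, hk₀⟩ := exists_nat_gt ((R + R) / τ)
  filter_upwards [eventually_ge_atTop k₀] with k hk q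
  rcases lt_or_ge R |q.1| with hq | hq
  · exact (hr_supp q hq).trans_le (eulerScheme_nonneg hτ.le ha hcfl hg k q)
  · refine le_eulerScheme hτ.le ha hcfl hg
      (fun q hq => (hr_supp q (hq.trans_le (le_abs_self _))).le) hr k q ?_
    have : R + R < k * τ := ((div_lt_iff₀ hτ).mp hk₀).trans_le (by gcongr)
    linarith [neg_le_of_abs_le hq]

lemma memLp_secondDiff (hv : MemLp v 2) (h : ℝ) : MemLp (secondDiff h v) 2 :=
  ((memLp_comp_add_right hv _).add (memLp_comp_add_right hv _)).sub (hv.const_mul 2)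

lemma toLp_secondDiff (hv : MemLp v 2 volume) (h : ℝ) :
    (memLp_secondDiff hv h).toLp _ = translateL2 volume (0, h) (hv.toLp v)
      + translateL2 volume (0, -h) (hv.toLp v) - (2 : ℝ) • hv.toLp v :=
  rfl

variable {δ : ℝ}

lemma memLp_mul_secondDiff (ha_meas : Measurable a) (ha : ∀ q, a q ∈ Set.Icc δ δ⁻¹)
    (hδ : 0 < δ) (hv : MemLp v 2) (c h : ℝ) :
    MemLp (fun q => c * a q * secondDiff h v q) 2 := by
  refine (memLp_secondDiff hv h).of_le_mul (c := |c| * δ⁻¹) ?_ (.of_forall fun q => ?_)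
  · exact (ha_meas.const_mul c).aestronglyMeasurable.mul (memLp_secondDiff hv h).1
  · rw [norm_mul, norm_mul, Real.norm_eq_abs c, Real.norm_of_nonneg (hδ.le.trans (ha q).1)]
    gcongr
    exact (ha q).2

lemma memLp_eulerScheme (ha_meas : Measurable a) (ha : ∀ q, a q ∈ Set.Icc δ δ⁻¹) (hδ : 0 < δ)
    (hg : MemLp g 2) (k : ℕ) : MemLp (eulerScheme h τ μ a g k) 2 := by
  induction k with
  | zero => exact MemLp.zero
  | succ k ih =>
    exact memLp_comp_add_right (ih.add (((memLp_mul_secondDiff ha_meas ha hδ ih _ h).sub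
      (ih.const_mul (τ * μ))).add (hg.const_mul τ))) (τ, 0)

lemma inner_toLp_mul_secondDiff_ge {ρ : ℝ} (hρ : 0 ≤ ρ) (ha_meas : Measurable a)
    (ha : ∀ q, a q ∈ Set.Icc δ δ⁻¹) (hδ : 0 < δ) (hv : MemLp v 2) :
    ρ * δ * ‖(memLp_secondDiff hv h).toLp _‖ ^ 2
      ≤ ⟪(memLp_secondDiff hv h).toLp _, (memLp_mul_secondDiff ha_meas ha hδ hv ρ h).toLp _⟫ := by
  have hL := memLp_secondDiff hv h
  have hp := memLp_mul_secondDiff ha_meas ha hδ hv ρ h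
  have inner_eq :
      ⟪hL.toLp _, hp.toLp _⟫ = ∫ q, secondDiff h v q * (ρ * a q * secondDiff h v q) := by
    rw [L2.inner_def]
    refine integral_congr_ae ?_
    filter_upwards [hL.coeFn_toLp, hp.coeFn_toLp] with q hLq hpq
    rw [hLq, hpq, real_inner_comm, RCLike.inner_apply, conj_trivial]
  rw [inner_eq, norm_toLp_sq, ← integral_const_mul]
  refine integral_mono (hL.integrable_sq.const_mul _) (hL.integrable_mul hp) fun q => ?_
  calc ρ * δ * secondDiff h v q ^ 2 ≤ ρ * a q * secondDiff h v q ^ 2 := by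
        gcongr; exact (ha q).1
    _ = _ := by ring

lemma norm_toLp_mul_secondDiff_le {ρ : ℝ} (hρ : 0 ≤ ρ) (ha_meas : Measurable a)
    (ha : ∀ q, a q ∈ Set.Icc δ δ⁻¹) (hδ : 0 < δ) (hv : MemLp v 2) :
    ‖(memLp_mul_secondDiff ha_meas ha hδ hv ρ h).toLp _‖
      ≤ ρ * δ⁻¹ * ‖(memLp_secondDiff hv h).toLp _‖ := by
  refine Lp.norm_le_mul_norm_of_ae_le_mul ?_
  filter_upwards [(memLp_secondDiff hv h).coeFn_toLp,
    (memLp_mul_secondDiff ha_meas ha hδ hv ρ h).coeFn_toLp] with q hLq hpq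
  rw [hLq, hpq, norm_mul, norm_mul, Real.norm_of_nonneg hρ,
    Real.norm_of_nonneg (hδ.le.trans (ha q).1)]
  gcongr
  exact (ha q).2

lemma toLp_eulerScheme_succ (ha_meas : Measurable a) (ha : ∀ q, a q ∈ Set.Icc δ δ⁻¹) (hδ : 0 < δ)
    (hg : MemLp g 2 volume) (k : ℕ) :
    let hv := memLp_eulerScheme (h := h) (τ := τ) (μ := μ) ha_meas ha hδ hg
    (hv (k + 1)).toLp _ = translateL2 volume (τ, 0) ((hv k).toLp _
      + ((memLp_mul_secondDiff ha_meas ha hδ (hv k) (τ / h ^ 2) h).toLp _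
        - (τ * μ) • (hv k).toLp _ + τ • hg.toLp g)) :=
  rfl

lemma sum_integral_eulerScheme_sq_le (hδ : δ ∈ Set.Ioo (0 : ℝ) 1) (hh : 0 < h) (hτ : 0 < τ)
    (hμ : 0 ≤ μ) (hmesh : τ * μ + 12 * δ⁻¹ ^ 3 * (τ / h ^ 2) ≤ 1 / 6) (ha_meas : Measurable a)
    (ha : ∀ q, a q ∈ Set.Icc δ δ⁻¹) (hg : MemLp g 2) (K : ℕ) :
    (τ * μ) ^ 2 * ∑ k ∈ Finset.range K, ∫ q, eulerScheme h τ μ a g k q ^ 2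
      ≤ K * (11 * δ⁻¹ ^ 4 * (τ ^ 2 * ∫ q, g q ^ 2)) := by
  have hv := memLp_eulerScheme (h := h) (τ := τ) (μ := μ) ha_meas ha hδ.1 hg
  have hD : 1 ≤ δ⁻¹ := (one_le_inv₀ hδ.1).mpr hδ.2.le
  have hρ : 0 < τ / h ^ 2 := by positivity
  have hm : 0 ≤ τ * μ := by positivity
  have norm_g : ‖τ • hg.toLp g‖ ^ 2 = τ ^ 2 * ∫ q, g q ^ 2 := by
    rw [norm_smul, mul_pow, norm_toLp_sq, Real.norm_eq_abs, sq_abs]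
  have translate_inv (v : Lp ℝ 2 (volume : Measure (ℝ × ℝ))) :
      translateL2 volume (0, h) (translateL2 volume (0, -h) v) = v := by
    rw [translateL2_translateL2, Prod.mk_add_mk, add_zero, add_neg_cancel, Prod.mk_zero_zero,
      translateL2_zero]
  have translate_comm (v : Lp ℝ 2 (volume : Measure (ℝ × ℝ))) :
      translateL2 volume (τ, 0) (translateL2 volume (0, h) v)
        = translateL2 volume (0, h) (translateL2 volume (τ, 0) v) := by
    rw [translateL2_translateL2, translateL2_translateL2, add_comm]
  simp only [← norm_toLp_sq (hv _), ← norm_g]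
  refine sum_norm_sq_le_of_diffEnergy_step (S := translateL2 volume (0, h))
    (κ := 3 * δ⁻¹ ^ 3 * (τ / h ^ 2)) hm (by positivity) rfl (fun k => ?_) K
  rw [toLp_eulerScheme_succ ha_meas ha hδ.1 hg]
  refine diffEnergy_step_le translate_inv translate_comm hD hρ hm hmesh ?_ ?_
  · rw [inv_inv, ← toLp_secondDiff]
    exact inner_toLp_mul_secondDiff_ge hρ.le ha_meas ha hδ.1 (hv k)
  · rw [← toLp_secondDiff]
    exact norm_toLp_mul_secondDiff_le hρ.le ha_meas ha hδ.1 (hv k)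

lemma integral_sq_le_of_le_eulerUpdate (hδ : δ ∈ Set.Ioo (0 : ℝ) 1) (hh : 0 < h) (hτ : 0 < τ)
    (hμ : 0 ≤ μ) (hmesh : τ * μ + 12 * δ⁻¹ ^ 3 * (τ / h ^ 2) ≤ 1 / 6) (ha_meas : Measurable a)
    (ha : ∀ q, a q ∈ Set.Icc δ δ⁻¹) (hg : MemLp g 2) (hg_nonneg : ∀ q, 0 ≤ g q)
    (hr_nonneg : ∀ q, 0 ≤ r q) (hr_supp : ∀ q, R < |q.1| → r q = 0)
    (hr : ∀ q, r q ≤ max 0 (eulerUpdate h τ μ a g r (q + (τ, 0)))) :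
    μ ^ 2 * ∫ q, r q ^ 2 ≤ 11 * δ⁻¹ ^ 4 * ∫ q, g q ^ 2 := by
  have ha_nonneg (q : ℝ × ℝ) : 0 ≤ a q := hδ.1.le.trans (ha q).1
  have hcfl (q : ℝ × ℝ) : 2 * (τ / h ^ 2 * a q) + τ * μ ≤ 1 :=
    cfl_of_mesh_le hδ (by positivity) (ha q).2 hmesh
  have hv := memLp_eulerScheme (h := h) (τ := τ) (μ := μ) ha_meas ha hδ.1 hg
  have cesaro : (τ * μ) ^ 2 * ∫ q, r q ^ 2 ≤ 11 * δ⁻¹ ^ 4 * (τ ^ 2 * ∫ q, g q ^ 2) := by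
    refine le_of_sum_range_le_of_eventually_le
      (x := fun k => (τ * μ) ^ 2 * ∫ q, eulerScheme h τ μ a g k q ^ 2)
      (fun k => by positivity) (fun K => ?_) ?_
    · rw [← Finset.mul_sum]
      exact sum_integral_eulerScheme_sq_le hδ hh hτ hμ hmesh ha_meas ha hg K
    · filter_upwards [eventually_le_eulerScheme hτ ha_nonneg hcfl hg_nonneg hr_supp hr] with k hk
      gcongr ?_ * ?_
      exact integral_mono_of_nonneg (.of_forall fun q => sq_nonneg _) (hv k).integrable_sq
        (.of_forall fun q => pow_le_pow_left₀ (hr_nonneg q) (hk q) 2)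
  have hτ2 : 0 < τ ^ 2 := by positivity
  refine le_of_mul_le_mul_left ?_ hτ2
  linarith

end EulerScheme

lemma eventually_norm_add_smul_sub_le {E F : Type*} [NormedAddCommGroup E] [NormedSpace ℝ E]
    [NormedAddCommGroup F] {w : E → F} (hw : Continuous w) (hsupp : HasCompactSupport w) (z : E)
    {ε : ℝ} (hε : 0 < ε) :
    ∀ᶠ h : ℝ in 𝓝 0, ∀ s ∈ Set.Icc (-1 : ℝ) 1, ∀ q, ‖w (q + s • h • z) - w q‖ ≤ ε := by
  obtain ⟨η, hη, hclose⟩ := Metric.uniformContinuous_iff.mp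
    (hsupp.uniformContinuous_of_continuous hw) ε hε
  have small : ∀ᶠ h : ℝ in 𝓝 0, ‖h • z‖ < η := by
    have : Tendsto (fun h : ℝ => ‖h • z‖) (𝓝 0) (𝓝 0) := by
      simpa using ((continuous_id.smul continuous_const).norm.tendsto (0 : ℝ) :
        Tendsto (fun h : ℝ => ‖h • z‖) _ _)
    exact this.eventually_lt_const hη
  filter_upwards [small] with h hh s hs q
  rw [← dist_eq_norm]
  refine (hclose ?_).le
  rw [dist_self_add_left, norm_smul, Real.norm_eq_abs]
  exact (mul_le_of_le_one_left (norm_nonneg _) (abs_le.mpr hs)).trans_lt hh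

section DirectionalDerivative

variable {E F : Type*} [NormedAddCommGroup E] [NormedSpace ℝ E] [NormedAddCommGroup F]
  [NormedSpace ℝ F]

/-- The derivative of `w` in the direction `z`, as a function of the base point. -/
noncomputable def dirDeriv (z : E) (w : E → F) (q : E) : F :=
  fderiv ℝ w q z

variable {w : E → F} {z : E}

lemma contDiff_dirDeriv {m n : WithTop ℕ∞} (hw : ContDiff ℝ n w) (hmn : m + 1 ≤ n) (z : E) :
    ContDiff ℝ m (dirDeriv z w) :=
  (hw.fderiv_right hmn).clm_apply contDiff_const

lemma hasCompactSupport_dirDeriv (hw : HasCompactSupport w) (z : E) :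
    HasCompactSupport (dirDeriv z w) :=
  hw.fderiv_apply ℝ z

lemma dirDeriv_smul (c : ℝ) (z : E) (w : E → F) : dirDeriv (c • z) w = c • dirDeriv z w := by
  ext q
  simp [dirDeriv]

lemma dirDeriv_comm (hw : ContDiff ℝ 2 w) (z z' : E) :
    dirDeriv z (dirDeriv z' w) = dirDeriv z' (dirDeriv z w) := by
  have dirDeriv_dirDeriv (z z' q : E) :
      dirDeriv z (dirDeriv z' w) q = fderiv ℝ (fderiv ℝ w) q z z' := by
    have hdiff : DifferentiableAt ℝ (fderiv ℝ w) q :=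
      (hw.fderiv_right (m := 1) (by norm_num)).differentiable one_ne_zero q
    unfold dirDeriv
    rw [fderiv_clm_apply hdiff (differentiableAt_const z')]
    simp
  ext q
  rw [dirDeriv_dirDeriv, dirDeriv_dirDeriv]
  exact (hw.contDiffAt.isSymmSndFDerivAt (by simp)).eq z z'

lemma norm_sub_sub_le_of_norm_dirDeriv_sub_le (hw : Differentiable ℝ w) {q : E} {c : F} {C : ℝ}
    (hC : ∀ s ∈ Set.Icc (0 : ℝ) 1, ‖dirDeriv z w (q + s • z) - c‖ ≤ C) :
    ‖w (q + z) - w q - c‖ ≤ C := by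
  have hderiv (s : ℝ) : HasDerivAt (fun s : ℝ => w (q + s • z) - s • c)
      (dirDeriv z w (q + s • z) - c) s := by
    have line : HasDerivAt (fun s : ℝ => q + s • z) z s := by
      simpa using ((hasDerivAt_id s).smul_const z).const_add q
    have scalar : HasDerivAt (fun s : ℝ => s • c) c s := by
      simpa using (hasDerivAt_id s).smul_const c
    exact ((hw _).hasFDerivAt.comp_hasDerivAt s line).sub scalar
  have := norm_image_sub_le_of_norm_deriv_le_segment_01'
    (fun s _ => (hderiv s).hasDerivWithinAt) fun s hs => hC s ⟨hs.1, hs.2.le⟩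
  simpa [sub_right_comm] using this

lemma norm_second_diff_sub_le_of_norm_dirDeriv_sub_le (hw : ContDiff ℝ 2 w) {q : E} {c : F} {C : ℝ}
    (hC : ∀ s ∈ Set.Icc (-1 : ℝ) 1, ‖dirDeriv z (dirDeriv z w) (q + s • z) - c‖ ≤ C) :
    ‖w (q + z) + w (q - z) - (2 : ℝ) • w q - c‖ ≤ C := by
  have hdiff : Differentiable ℝ w := hw.differentiable two_ne_zero
  have hdiff' : Differentiable ℝ (dirDeriv z w) :=
    (contDiff_dirDeriv (m := 1) hw (by norm_num) z).differentiable one_ne_zero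
  have hdiff_shift : Differentiable ℝ fun q => w (q + z) :=
    hdiff.comp (differentiable_id.add_const z)
  have dirDeriv_diff (p : E) : dirDeriv z (fun q => w (q + z) - w q) p
      = dirDeriv z w (p + z) - dirDeriv z w p := by
    rw [dirDeriv, fderiv_fun_sub (hdiff_shift p) (hdiff p), fderiv_comp_add_right]
    rfl
  have diff_diff : w (q + z) + w (q - z) - (2 : ℝ) • w q - c
      = (w (q - z + z + z) - w (q - z + z)) - (w (q - z + z) - w (q - z)) - c := by
    rw [sub_add_cancel, two_smul]; abel
  rw [diff_diff]
  refine norm_sub_sub_le_of_norm_dirDeriv_sub_le (w := fun q => w (q + z) - w q)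
    (hdiff_shift.sub hdiff) fun s hs => ?_
  rw [dirDeriv_diff]
  refine norm_sub_sub_le_of_norm_dirDeriv_sub_le hdiff' fun s' hs' => ?_
  have base : q - z + s • z + s' • z = q + (s + s' - 1) • z := by module
  rw [base]
  exact hC _ ⟨by linarith [hs.1, hs'.1], by linarith [hs.2, hs'.2]⟩

lemma dist_inv_smul_le {c : ℝ} (hc : c ≠ 0) {x y : F} {ε : ℝ} (h : ‖x - c • y‖ ≤ |c| * ε) :
    dist y (c⁻¹ • x) ≤ ε := by
  have rescale : c⁻¹ • x - y = c⁻¹ • (x - c • y) := by rw [smul_sub, inv_smul_smul₀ hc]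
  rwa [dist_comm, dist_eq_norm, rescale, norm_smul, norm_inv, Real.norm_eq_abs,
    inv_mul_le_iff₀ (abs_pos.mpr hc)]

lemma tendstoUniformly_diff_quotient (hw : ContDiff ℝ 1 w) (hsupp : HasCompactSupport w) (z : E) :
    TendstoUniformly (fun (h : ℝ) q => h⁻¹ • (w (q + h • z) - w q)) (dirDeriv z w)
      (𝓝[≠] 0) := by
  refine Metric.tendstoUniformly_iff.mpr fun ε hε => ?_
  have uniform := eventually_norm_add_smul_sub_le
    (contDiff_dirDeriv (m := 0) hw (by norm_num) z).continuous (hasCompactSupport_dirDeriv hsupp z)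
    z (half_pos hε)
  filter_upwards [nhdsWithin_le_nhds uniform, self_mem_nhdsWithin] with h hclose (hh : h ≠ 0) q
  have taylor : ‖w (q + h • z) - w q - h • dirDeriv z w q‖ ≤ |h| * (ε / 2) := by
    refine norm_sub_sub_le_of_norm_dirDeriv_sub_le (hw.differentiable one_ne_zero) fun s hs => ?_
    rw [dirDeriv_smul, Pi.smul_apply, ← smul_sub, norm_smul, Real.norm_eq_abs]
    exact mul_le_mul_of_nonneg_left (hclose s ⟨by linarith [hs.1], hs.2⟩ q) (abs_nonneg h)
  exact (dist_inv_smul_le hh taylor).trans_lt (half_lt_self hε)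

lemma tendstoUniformly_backward_diff_quotient (hw : ContDiff ℝ 1 w) (hsupp : HasCompactSupport w)
    (z : E) :
    TendstoUniformly (fun (h : ℝ) q => h⁻¹ • (w q - w (q - h • z))) (dirDeriv z w) (𝓝[≠] 0) := by
  have tendsto_neg : Tendsto (fun h : ℝ => -h) (𝓝[≠] 0) (𝓝[≠] 0) := by
    refine tendsto_nhdsWithin_iff.mpr ⟨?_, ?_⟩
    · simpa using (continuous_neg.tendsto (0 : ℝ)).mono_left nhdsWithin_le_nhds
    · filter_upwards [self_mem_nhdsWithin] with h hh using neg_ne_zero.mpr hh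
  have reflect : (fun (h : ℝ) q => h⁻¹ • (w q - w (q - h • z)))
      = fun h q => (-h)⁻¹ • (w (q + (-h) • z) - w q) := by
    ext h q
    rw [inv_neg, neg_smul, neg_smul, ← smul_neg, neg_sub, sub_eq_add_neg q]
  rw [reflect]
  exact fun s hs => tendsto_neg.eventually (tendstoUniformly_diff_quotient hw hsupp z s hs)

lemma tendstoUniformly_central_diff_quotient (hw : ContDiff ℝ 1 w) (hsupp : HasCompactSupport w)
    (z : E) :
    TendstoUniformly (fun (h : ℝ) q => h⁻¹ • (w (q + h • z) - w (q - h • z)))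
      ((2 : ℝ) • dirDeriv z w) (𝓝[≠] 0) := by
  rw [two_smul]
  convert (tendstoUniformly_diff_quotient hw hsupp z).add
    (tendstoUniformly_backward_diff_quotient hw hsupp z) using 3 with h q
  simp only [Pi.add_apply, ← smul_add, sub_add_sub_cancel]

lemma tendstoUniformly_second_diff_quotient (hw : ContDiff ℝ 2 w) (hsupp : HasCompactSupport w)
    (z : E) :
    TendstoUniformly (fun (h : ℝ) q => (h ^ 2)⁻¹ • (w (q + h • z) + w (q - h • z) - (2 : ℝ) • w q))
      (dirDeriv z (dirDeriv z w)) (𝓝[≠] 0) := by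
  refine Metric.tendstoUniformly_iff.mpr fun ε hε => ?_
  have hw' : ContDiff ℝ 1 (dirDeriv z w) := contDiff_dirDeriv hw (by norm_num) z
  have uniform := eventually_norm_add_smul_sub_le
    (contDiff_dirDeriv (m := 0) hw' (by norm_num) z).continuous
    (hasCompactSupport_dirDeriv (hasCompactSupport_dirDeriv hsupp z) z) z (half_pos hε)
  filter_upwards [nhdsWithin_le_nhds uniform, self_mem_nhdsWithin] with h hclose (hh : h ≠ 0) q
  have taylor : ‖w (q + h • z) + w (q - h • z) - (2 : ℝ) • w q
      - h ^ 2 • dirDeriv z (dirDeriv z w) q‖ ≤ |h ^ 2| * (ε / 2) := by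
    refine norm_second_diff_sub_le_of_norm_dirDeriv_sub_le hw fun s hs => ?_
    have scale : dirDeriv (h • z) (dirDeriv (h • z) w) = h ^ 2 • dirDeriv z (dirDeriv z w) := by
      ext p
      rw [dirDeriv_smul, dirDeriv_smul, Pi.smul_apply, dirDeriv,
        fderiv_const_smul (hw'.differentiable one_ne_zero p), smul_apply, smul_smul,
        ← sq, Pi.smul_apply, dirDeriv]
    rw [scale, Pi.smul_apply, ← smul_sub, norm_smul, Real.norm_eq_abs]
    exact mul_le_mul_of_nonneg_left (hclose s hs q) (abs_nonneg _)
  exact (dist_inv_smul_le (pow_ne_zero 2 hh) taylor).trans_lt (half_lt_self hε)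

end DirectionalDerivative

section DiscreteKato

/-- Pointwise bounds on the coefficients of `w ↦ w_t + a w_yy + 2 i b w_y - c w`: ellipticity of
`a`, and domination of the first-order term by `a` and the excess `c - μ` of `c` over a damping
constant `μ`. -/
structure CoeffBounds (δ μ a b c : ℝ) : Prop where
  mem_Icc : a ∈ Set.Icc δ δ⁻¹
  sq_le : b ^ 2 ≤ a * (c - μ)
  le_mul : c ≤ δ⁻¹ ^ 2 * μ

/-- The operator `w ↦ w_t + a w_yy + 2 i b w_y - c w` in the variables `(t, y)`. -/
noncomputable def parabolicOp (a b c : ℝ × ℝ → ℝ) (w : ℝ × ℝ → ℂ) (q : ℝ × ℝ) : ℂ :=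
  dirDeriv (1, 0) w q + a q * dirDeriv (0, 1) (dirDeriv (0, 1) w) q
    + 2 * Complex.I * b q * dirDeriv (0, 1) w q - c q * w q

/-- The finite-difference version of `parabolicOp`: a backward difference in time, central
differences in space. -/
noncomputable def discreteParabolicOp (h τ : ℝ) (a b c : ℝ × ℝ → ℝ) (w : ℝ × ℝ → ℂ)
    (q : ℝ × ℝ) : ℂ :=
  (w q - w (q - (τ, 0))) / τ + a q * ((w (q + (0, h)) + w (q + (0, -h)) - 2 * w q) / h ^ 2)
    + Complex.I * b q * ((w (q + (0, h)) - w (q + (0, -h))) / h) - c q * w q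

lemma norm_add_mul_I_le {a s γ : ℝ} (ha : 0 ≤ a) (hγ : 0 ≤ γ) (hs : s ^ 2 ≤ 2 * a * γ) :
    ‖(a + s * Complex.I : ℂ)‖ ≤ a + γ := by
  rw [Complex.norm_add_mul_I]
  exact Real.sqrt_le_iff.mpr ⟨by positivity, by nlinarith⟩

variable {δ μ h τ : ℝ}

lemma CoeffBounds.le (hδ : 0 < δ) {a b c : ℝ} (habc : CoeffBounds δ μ a b c) : μ ≤ c := by
  have ha : 0 < a := hδ.trans_le habc.mem_Icc.1
  exact sub_nonneg.mp (nonneg_of_mul_nonneg_right ((sq_nonneg b).trans habc.sq_le) ha)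

/-- The weights of `Wr` and `Wl` are complex, of modulus at most `τ (a / h² + (c - μ) / 2)`, so
the first-order term costs no more than the damping `c - μ`. -/
lemma norm_le_of_discrete_equation (hδ : 0 < δ) (hh : 0 < h) (hτ : 0 < τ) {a b c : ℝ}
    (habc : CoeffBounds δ μ a b c) (hcfl : 2 * (τ / h ^ 2 * a) + τ * c ≤ 1) {W Wr Wl W' F : ℂ}
    (hF : F = (W - W') / τ + a * ((Wr + Wl - 2 * W) / h ^ 2) + Complex.I * b * ((Wr - Wl) / h)
      - c * W) :
    ‖W'‖ ≤ ‖W‖ + τ / h ^ 2 * a * (‖Wr‖ + ‖Wl‖ - 2 * ‖W‖) - τ * c * ‖W‖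
      + τ * (c - μ) * ((‖Wr‖ + ‖Wl‖) / 2) + τ * ‖F‖ := by
  have ha : 0 < a := hδ.trans_le habc.mem_Icc.1
  have hγ : 0 ≤ (c - μ) * h ^ 2 / 2 := by
    have := sub_nonneg.mpr (habc.le hδ)
    positivity
  have hbh : (b * h) ^ 2 ≤ 2 * a * ((c - μ) * h ^ 2 / 2) := by
    nlinarith [mul_le_mul_of_nonneg_right habc.sq_le (sq_nonneg h)]
  have weight_right := norm_add_mul_I_le ha.le hγ hbh
  have weight_left := norm_add_mul_I_le (s := -(b * h)) ha.le hγ (by rwa [neg_sq])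
  have hτ' : (τ : ℂ) ≠ 0 := by exact_mod_cast hτ.ne'
  have hh' : (h : ℂ) ≠ 0 := by exact_mod_cast hh.ne'
  have hW' : W' = ((1 - (2 * (τ / h ^ 2 * a) + τ * c) : ℝ) : ℂ) * W
      + ((τ / h ^ 2 : ℝ) : ℂ) * ((a + (b * h : ℝ) * Complex.I) * Wr)
      + ((τ / h ^ 2 : ℝ) : ℂ) * ((a + (-(b * h) : ℝ) * Complex.I) * Wl) + -(τ * F) := by
    rw [hF]
    push_cast
    field_simp
    ring
  calc ‖W'‖ ≤ (1 - (2 * (τ / h ^ 2 * a) + τ * c)) * ‖W‖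
        + τ / h ^ 2 * ((a + (c - μ) * h ^ 2 / 2) * ‖Wr‖)
        + τ / h ^ 2 * ((a + (c - μ) * h ^ 2 / 2) * ‖Wl‖) + τ * ‖F‖ := by
        rw [hW']
        refine (norm_add₄_le).trans ?_
        simp only [norm_neg, norm_mul, Complex.norm_of_nonneg (sub_nonneg.mpr hcfl),
          Complex.norm_of_nonneg hτ.le, Complex.norm_of_nonneg (show 0 ≤ τ / h ^ 2 by positivity)]
        gcongr
    _ = _ := by field_simp; ring

lemma norm_sub_le_eulerUpdate (hδ : 0 < δ) (hh : 0 < h) (hτ : 0 < τ) {a b c : ℝ × ℝ → ℝ}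
    {w : ℝ × ℝ → ℂ} {g : ℝ × ℝ → ℝ} {q : ℝ × ℝ} (habc : CoeffBounds δ μ (a q) (b q) (c q))
    (hcfl : 2 * (τ / h ^ 2 * a q) + τ * c q ≤ 1) {ω : ℝ}
    (hright : ‖w (q + (0, h))‖ ≤ ‖w q‖ + ω) (hleft : ‖w (q + (0, -h))‖ ≤ ‖w q‖ + ω)
    (hg : ‖discreteParabolicOp h τ a b c w q‖ + (c q - μ) * ω ≤ g q) :
    ‖w (q - (τ, 0))‖ ≤ eulerUpdate h τ μ a g (fun p => ‖w p‖) q := by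
  have excess : 0 ≤ τ * (c q - μ) := mul_nonneg hτ.le (sub_nonneg.mpr (habc.le hδ))
  have kato := norm_le_of_discrete_equation hδ hh hτ habc hcfl
    (F := discreteParabolicOp h τ a b c w q) rfl
  unfold eulerUpdate secondDiff
  nlinarith [mul_le_mul_of_nonneg_left hright excess, mul_le_mul_of_nonneg_left hleft excess,
    mul_le_mul_of_nonneg_left hg hτ.le]

end DiscreteKato

section Consistency

variable {A B : ℝ} {a b c : ℝ × ℝ → ℝ} {w : ℝ × ℝ → ℂ}

lemma discreteParabolicOp_sub_parabolicOp (h τ : ℝ) (q : ℝ × ℝ) :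
    discreteParabolicOp h τ a b c w q - parabolicOp a b c w q
      = (τ⁻¹ • (w q - w (q - τ • (1, 0))) - dirDeriv (1, 0) w q)
        + a q * ((h ^ 2)⁻¹ • (w (q + h • (0, 1)) + w (q - h • (0, 1)) - (2 : ℝ) • w q)
          - dirDeriv (0, 1) (dirDeriv (0, 1) w) q)
        + Complex.I * b q * (h⁻¹ • (w (q + h • (0, 1)) - w (q - h • (0, 1)))
          - ((2 : ℝ) • dirDeriv (0, 1) w) q) := by
  simp only [discreteParabolicOp, parabolicOp, Pi.smul_apply, Complex.real_smul, sub_eq_add_neg q,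
    Prod.smul_mk, smul_eq_mul, mul_zero, mul_one, Prod.neg_mk, neg_zero]
  push_cast
  ring

lemma eventually_norm_discreteParabolicOp_sub_le (hw : ContDiff ℝ 2 w)
    (hsupp : HasCompactSupport w) (ha : ∀ q, |a q| ≤ A) (hb : ∀ q, |b q| ≤ B) {τ : ℝ → ℝ}
    (hτ : Tendsto τ (𝓝[>] 0) (𝓝[≠] 0)) {ε : ℝ} (hε : 0 < ε) :
    ∀ᶠ h : ℝ in 𝓝[>] 0, ∀ q,
      ‖discreteParabolicOp h (τ h) a b c w q - parabolicOp a b c w q‖ ≤ ε := by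
  have hA : 0 ≤ A := (abs_nonneg _).trans (ha 0)
  have hB : 0 ≤ B := (abs_nonneg _).trans (hb 0)
  have hω : 0 < ε / (1 + A + B) := by positivity
  have hw₁ : ContDiff ℝ 1 w := hw.of_le one_le_two
  have time := Metric.tendstoUniformly_iff.mp
    (tendstoUniformly_backward_diff_quotient hw₁ hsupp (1, 0)) _ hω
  have central := Metric.tendstoUniformly_iff.mp
    (tendstoUniformly_central_diff_quotient hw₁ hsupp (0, 1)) _ hω
  have second := Metric.tendstoUniformly_iff.mp
    (tendstoUniformly_second_diff_quotient hw hsupp (0, 1)) _ hω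
  filter_upwards [hτ.eventually time, nhdsGT_le_nhdsNE _ central, nhdsGT_le_nhdsNE _ second]
    with h htime hcentral hsecond q
  have htime := (htime q).le
  have hcentral := (hcentral q).le
  have hsecond := (hsecond q).le
  rw [dist_comm, dist_eq_norm] at htime hcentral hsecond
  rw [discreteParabolicOp_sub_parabolicOp]
  refine (norm_add₃_le).trans ?_
  rw [norm_mul, norm_mul, norm_mul, Complex.norm_I, one_mul, Complex.norm_real, Complex.norm_real,
    Real.norm_eq_abs, Real.norm_eq_abs]
  calc _ ≤ ε / (1 + A + B) + A * (ε / (1 + A + B)) + B * (ε / (1 + A + B)) := by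
        gcongr
        · exact ha q
        · exact hb q
    _ = ε := by field_simp

end Consistency

section ZerothOrder

lemma le_mul_integral_sq_of_forall_add_mul {α : Type*} [MeasurableSpace α] {ν : Measure α}
    {F χ : α → ℝ} (hF : MemLp F 2 ν) (hχ : MemLp χ 2 ν) {x C : ℝ}
    (h : ∀ ε > 0, x ≤ C * ∫ q, (F q + ε * χ q) ^ 2 ∂ν) : x ≤ C * ∫ q, F q ^ 2 ∂ν := by
  have expand (ε : ℝ) : ∫ q, (F q + ε * χ q) ^ 2 ∂ν
      = ∫ q, F q ^ 2 ∂ν + 2 * ε * ∫ q, F q * χ q ∂ν + ε ^ 2 * ∫ q, χ q ^ 2 ∂ν := by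
    have cross : Integrable (fun q => 2 * ε * (F q * χ q)) ν := (hF.integrable_mul hχ).const_mul _
    have linear : Integrable (fun q => F q ^ 2 + 2 * ε * (F q * χ q)) ν :=
      hF.integrable_sq.add cross
    rw [← integral_const_mul, ← integral_const_mul, ← integral_add hF.integrable_sq cross,
      ← integral_add linear (hχ.integrable_sq.const_mul _)]
    congr with q
    ring
  have lim : Tendsto (fun ε : ℝ => C * ∫ q, (F q + ε * χ q) ^ 2 ∂ν) (𝓝[>] 0)
      (𝓝 (C * ∫ q, F q ^ 2 ∂ν)) := by
    simp only [expand]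
    refine Tendsto.mono_left (Continuous.tendsto' (by fun_prop) 0 _ ?_) nhdsWithin_le_nhds
    ring
  exact ge_of_tendsto lim (eventually_nhdsWithin_of_forall h)

variable {δ μ : ℝ}

lemma CoeffBounds.abs_second_le (hδ : 0 < δ) {a b c : ℝ} (habc : CoeffBounds δ μ a b c) :
    |a| ≤ δ⁻¹ := by
  rw [abs_of_nonneg (hδ.le.trans habc.mem_Icc.1)]
  exact habc.mem_Icc.2

lemma CoeffBounds.abs_zeroth_le (hδ : 0 < δ) (hμ : 0 ≤ μ) {a b c : ℝ}
    (habc : CoeffBounds δ μ a b c) : |c| ≤ δ⁻¹ ^ 2 * μ := by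
  rw [abs_of_nonneg (hμ.trans (habc.le hδ))]
  exact habc.le_mul

lemma CoeffBounds.sq_first_le (hδ : 0 < δ) (hμ : 0 ≤ μ) {a b c : ℝ}
    (habc : CoeffBounds δ μ a b c) : b ^ 2 ≤ δ⁻¹ ^ 3 * μ :=
  calc b ^ 2 ≤ a * (c - μ) := habc.sq_le
    _ ≤ δ⁻¹ * (δ⁻¹ ^ 2 * μ) :=
        mul_le_mul habc.mem_Icc.2 ((sub_le_self c hμ).trans habc.le_mul)
          (sub_nonneg.mpr (habc.le hδ)) (inv_nonneg.mpr hδ.le)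
    _ = δ⁻¹ ^ 3 * μ := by ring

lemma CoeffBounds.abs_first_le (hδ : 0 < δ) (hμ : 0 ≤ μ) {a b c : ℝ}
    (habc : CoeffBounds δ μ a b c) : |b| ≤ √(δ⁻¹ ^ 3 * μ) :=
  Real.abs_le_sqrt (habc.sq_first_le hδ hμ)

variable {a b c : ℝ × ℝ → ℝ} {w : ℝ × ℝ → ℂ}

lemma memLp_parabolicOp (hδ : 0 < δ) (hμ : 0 ≤ μ) (ha : Measurable a) (hb : Measurable b)
    (hc : Measurable c) (habc : ∀ q, CoeffBounds δ μ (a q) (b q) (c q)) (hw : ContDiff ℝ 2 w)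
    (hsupp : HasCompactSupport w) : MemLp (parabolicOp a b c w) 2 := by
  have bdd_mul {α v : ℝ × ℝ → ℂ} {B : ℝ} (hα : Measurable α) (hB : ∀ q, ‖α q‖ ≤ B)
      (hv : Continuous v) (hv_supp : HasCompactSupport v) : MemLp (fun q => α q * v q) 2 :=
    (hv.memLp_of_hasCompactSupport hv_supp).of_le_mul (c := B)
      (hα.aestronglyMeasurable.mul hv.aestronglyMeasurable) (.of_forall fun q => by
        rw [norm_mul]; gcongr; exact hB q)
  have hw' (z : ℝ × ℝ) : ContDiff ℝ 1 (dirDeriv z w) := contDiff_dirDeriv hw (by norm_num) z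
  have hsupp' (z : ℝ × ℝ) := hasCompactSupport_dirDeriv hsupp z
  refine (((hw' _).continuous.memLp_of_hasCompactSupport (hsupp' _)).add
    (bdd_mul (B := δ⁻¹) (by fun_prop) (fun q => ?_)
      (contDiff_dirDeriv (m := 0) (hw' _) (by norm_num) _).continuous
      (hasCompactSupport_dirDeriv (hsupp' _) _)) |>.add
    (bdd_mul (B := 2 * √(δ⁻¹ ^ 3 * μ)) (by fun_prop) (fun q => ?_) (hw' _).continuous
      (hsupp' _))).sub
    (bdd_mul (B := δ⁻¹ ^ 2 * μ) (by fun_prop) (fun q => ?_) hw.continuous hsupp)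
  · simpa using (habc q).abs_second_le hδ
  · simpa using (habc q).abs_first_le hδ hμ
  · simpa using (habc q).abs_zeroth_le hδ hμ

/-- The time step `τ` belonging to the space step `h`. The ratio `τ / h² = δ³ / 144` uses up half of
the mesh condition of `diffEnergy_step_le` and leaves the other half to the lower-order term. -/
noncomputable def timeStep (δ h : ℝ) : ℝ := δ ^ 3 / 144 * h ^ 2

lemma tendsto_timeStep (hδ : 0 < δ) : Tendsto (timeStep δ) (𝓝[>] 0) (𝓝[>] 0) := by
  refine tendsto_nhdsWithin_iff.mpr ⟨?_, ?_⟩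
  · refine Tendsto.mono_left (Continuous.tendsto' ?_ 0 0 (by simp [timeStep])) nhdsWithin_le_nhds
    unfold timeStep
    fun_prop
  · filter_upwards [self_mem_nhdsWithin] with h (hh : 0 < h)
    exact Set.mem_Ioi.mpr (by unfold timeStep; positivity)

lemma timeStep_div_sq {h : ℝ} (hh : h ≠ 0) : timeStep δ h / h ^ 2 = δ ^ 3 / 144 := by
  rw [timeStep]
  field_simp

lemma eventually_timeStep_mul_le (hδ : 0 < δ) (M : ℝ) {ε : ℝ} (hε : 0 < ε) :
    ∀ᶠ h in 𝓝[>] 0, timeStep δ h * M ≤ ε := by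
  have lim := ((tendsto_nhdsWithin_iff.mp (tendsto_timeStep hδ)).1).mul_const M
  rw [zero_mul] at lim
  exact lim.eventually_le_const hε

lemma eventually_timeStep_mesh_le (hδ : 0 < δ) (M : ℝ) :
    ∀ᶠ h in 𝓝[>] 0, timeStep δ h * M + 12 * δ⁻¹ ^ 3 * (timeStep δ h / h ^ 2) ≤ 1 / 6 := by
  filter_upwards [self_mem_nhdsWithin,
    eventually_timeStep_mul_le hδ M (show (0 : ℝ) < 1 / 12 by norm_num)] with h (hh : 0 < h) hM
  have ratio : 12 * δ⁻¹ ^ 3 * (timeStep δ h / h ^ 2) = 1 / 12 := by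
    rw [timeStep_div_sq hh.ne']
    field_simp
    norm_num
  linarith

lemma eventually_norm_le_eulerUpdate (hδ : δ ∈ Set.Ioo (0 : ℝ) 1) (hμ : 0 ≤ μ)
    (habc : ∀ q, CoeffBounds δ μ (a q) (b q) (c q)) (hw : ContDiff ℝ 2 w)
    (hsupp : HasCompactSupport w) {ε : ℝ} (hε : 0 < ε) :
    ∀ᶠ h in 𝓝[>] 0, ∀ q, ∀ g : ℝ × ℝ → ℝ, ‖parabolicOp a b c w q‖ + ε ≤ g q →
      ‖w (q - (timeStep δ h, 0))‖ ≤ eulerUpdate h (timeStep δ h) μ a g (fun p => ‖w p‖) q := by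
  have hδ0 := hδ.1
  set C := δ⁻¹ ^ 2 * μ
  have : 0 ≤ C := by positivity
  have consistent := eventually_norm_discreteParabolicOp_sub_le (c := c) hw hsupp
    (fun q => (habc q).abs_second_le hδ0) (fun q => (habc q).abs_first_le hδ0 hμ)
    ((tendsto_timeStep hδ0).mono_right (nhdsGT_le_nhdsNE 0)) (half_pos hε)
  have uniform := eventually_norm_add_smul_sub_le hw.continuous hsupp (0, 1)
    (show 0 < ε / 2 / (C + 1) by positivity)
  filter_upwards [self_mem_nhdsWithin, consistent, nhdsWithin_le_nhds uniform,
    tendsto_timeStep hδ0 self_mem_nhdsWithin, eventually_timeStep_mesh_le hδ0 C]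
    with h (hh : 0 < h) hcons hunif (hτ : 0 < timeStep δ h) hmesh q g hg
  have neighbour (s : ℝ) (hs : s ∈ Set.Icc (-1) 1) :
      ‖w (q + (0, s * h))‖ ≤ ‖w q‖ + ε / 2 / (C + 1) := by
    have := (norm_sub_norm_le _ _).trans (hunif s hs q)
    simp only [Prod.smul_mk, smul_eq_mul, mul_zero, mul_one] at this
    linarith
  have cfl : 2 * (timeStep δ h / h ^ 2 * a q) + timeStep δ h * c q ≤ 1 := by
    refine cfl_of_mesh_le hδ (by positivity) (habc q).mem_Icc.2 (le_trans ?_ hmesh)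
    gcongr
    exact (habc q).le_mul
  refine norm_sub_le_eulerUpdate hδ0 hh hτ (habc q) cfl (ω := ε / 2 / (C + 1))
    (by simpa using neighbour 1 (by simp)) (by simpa using neighbour (-1) (by simp)) ?_
  have discrete :
      ‖discreteParabolicOp h (timeStep δ h) a b c w q‖ ≤ ‖parabolicOp a b c w q‖ + ε / 2 := by
    linarith [(norm_sub_norm_le _ _).trans (hcons q)]
  have excess : (c q - μ) * (ε / 2 / (C + 1)) ≤ ε / 2 := by
    rw [← mul_div_assoc, div_le_iff₀ (by positivity), mul_comm]
    gcongr
    linarith [(habc q).le_mul]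
  linarith

lemma eventually_norm_le_max_eulerUpdate (hδ : δ ∈ Set.Ioo (0 : ℝ) 1) (hμ : 0 ≤ μ)
    (habc : ∀ q, CoeffBounds δ μ (a q) (b q) (c q)) (hw : ContDiff ℝ 2 w)
    (hsupp : HasCompactSupport w) {ε : ℝ} (hε : 0 < ε) :
    ∀ᶠ h in 𝓝[>] 0, ∀ q, ‖w q‖ ≤ max 0 (eulerUpdate h (timeStep δ h) μ a
      (fun q => ‖parabolicOp a b c w q‖
        + ε * (Metric.cthickening 1 (tsupport w)).indicator 1 q)
      (fun p => ‖w p‖) (q + (timeStep δ h, 0))) := by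
  filter_upwards [eventually_norm_le_eulerUpdate hδ hμ habc hw hsupp hε,
    tendsto_timeStep hδ.1 self_mem_nhdsWithin, eventually_timeStep_mul_le hδ.1 1 one_pos]
    with h hstep (hτ : 0 < timeStep δ h) hτ1 q
  by_cases hq : q + (timeStep δ h, 0) ∈ Metric.cthickening 1 (tsupport w)
  · refine le_max_of_le_right (Eq.trans_le ?_ (hstep (q + (timeStep δ h, 0)) _ ?_))
    · rw [add_sub_cancel_right]
    · rw [Set.indicator_of_mem hq, Pi.one_apply, mul_one]
  · have hwq : w q = 0 := by
      by_contra hwq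
      refine hq (Metric.mem_cthickening_of_dist_le _ q 1 _ (subset_tsupport w hwq) ?_)
      rw [dist_self_add_left]
      simpa [Prod.norm_def, abs_of_pos hτ] using hτ1
    rw [hwq, norm_zero]
    exact le_max_left _ _

theorem sq_mul_integral_norm_sq_le (hδ : δ ∈ Set.Ioo (0 : ℝ) 1) (hμ : 0 ≤ μ) (ha : Measurable a)
    (hb : Measurable b) (hc : Measurable c) (habc : ∀ q, CoeffBounds δ μ (a q) (b q) (c q))
    (hw : ContDiff ℝ 2 w) (hsupp : HasCompactSupport w) :
    μ ^ 2 * ∫ q, ‖w q‖ ^ 2 ≤ 11 * δ⁻¹ ^ 4 * ∫ q, ‖parabolicOp a b c w q‖ ^ 2 := by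
  have hK : IsCompact (Metric.cthickening 1 (tsupport w)) := IsCompact.cthickening hsupp
  have hf := (memLp_parabolicOp hδ.1 hμ ha hb hc habc hw hsupp).norm
  have hχ : MemLp ((Metric.cthickening 1 (tsupport w)).indicator (1 : ℝ × ℝ → ℝ)) 2 :=
    memLp_indicator_const 2 hK.measurableSet 1 (.inr hK.measure_lt_top.ne)
  refine le_mul_integral_sq_of_forall_add_mul hf hχ fun ε hε => ?_
  obtain ⟨h, hstep, hh, hτ, hmesh⟩ :=
    ((eventually_norm_le_max_eulerUpdate hδ hμ habc hw hsupp hε).and <|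
      (eventually_mem_nhdsWithin (a := (0 : ℝ)) (s := Set.Ioi 0)).and <|
      ((tendsto_timeStep hδ.1).eventually eventually_mem_nhdsWithin).and <|
      eventually_timeStep_mesh_le hδ.1 μ).exists
  obtain ⟨R, hR⟩ := hsupp.isBounded.exists_norm_le
  refine integral_sq_le_of_le_eulerUpdate (R := R) hδ hh hτ hμ hmesh ha
    (fun q => (habc q).mem_Icc) (hf.add (hχ.const_mul ε)) (fun q => ?_) (fun q => norm_nonneg _)
    (fun q hq => ?_) hstep
  · exact add_nonneg (norm_nonneg _) (mul_nonneg hε.le (Set.indicator_nonneg (by simp) q))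
  · rw [norm_eq_zero]
    by_contra hwq
    exact hq.not_ge ((norm_fst_le q).trans (hR q (subset_tsupport w hwq)))

end ZerothOrder

section IntegrationByParts

section Integrable

variable {E F : Type*} [TopologicalSpace E] [MeasurableSpace E] [OpensMeasurableSpace E]
  {ν : Measure E} [IsFiniteMeasureOnCompacts ν] [NormedAddCommGroup F] [InnerProductSpace ℝ F]

lemma integrable_inner_of_hasCompactSupport {v w : E → F} (hv : Continuous v)
    (hv_supp : HasCompactSupport v) (hw : Continuous w) : Integrable (fun q => ⟪v q, w q⟫) ν :=
  (hv.inner hw).integrable_of_hasCompactSupport <|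
    hv_supp.mono fun q hq hvq => hq (by simp only [hvq, inner_zero_left])

lemma integrable_norm_sq_of_hasCompactSupport {w : E → F} (hw : Continuous w)
    (hsupp : HasCompactSupport w) : Integrable (fun q => ‖w q‖ ^ 2) ν := by
  simpa only [real_inner_self_eq_norm_sq] using integrable_inner_of_hasCompactSupport hw hsupp hw

end Integrable

variable {E F : Type*} [NormedAddCommGroup E] [NormedSpace ℝ E] [FiniteDimensional ℝ E]
  [MeasurableSpace E] [BorelSpace E] {ν : Measure E} [ν.IsAddHaarMeasure] [NormedAddCommGroup F]
  [InnerProductSpace ℝ F] {w : E → F}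

lemma integral_inner_dirDeriv_right {v : E → F} (hv : ContDiff ℝ 1 v)
    (hv_supp : HasCompactSupport v) (hw : ContDiff ℝ 1 w) (z : E) :
    ∫ q, ⟪v q, dirDeriv z w q⟫ ∂ν = -∫ q, ⟪dirDeriv z v q, w q⟫ ∂ν := by
  have continuous_dirDeriv {v : E → F} (hv : ContDiff ℝ 1 v) : Continuous (dirDeriv z v) :=
    (contDiff_dirDeriv (m := 0) hv (by norm_num) z).continuous
  exact integral_bilinear_fderiv_right_eq_neg_left_of_integrable (B := innerSL ℝ)
    (integrable_inner_of_hasCompactSupport (continuous_dirDeriv hv)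
      (hasCompactSupport_dirDeriv hv_supp z) hw.continuous)
    (integrable_inner_of_hasCompactSupport hv.continuous hv_supp (continuous_dirDeriv hw))
    (integrable_inner_of_hasCompactSupport hv.continuous hv_supp hw.continuous)
    (fun q _ => hv.differentiable one_ne_zero q) (fun q _ => hw.differentiable one_ne_zero q)

lemma integral_inner_dirDeriv_dirDeriv_dirDeriv (hw : ContDiff ℝ 2 w) (hsupp : HasCompactSupport w)
    (z z' : E) :
    ∫ q, ⟪dirDeriv z w q, dirDeriv z' (dirDeriv z' w) q⟫ ∂ν = 0 := by
  have hw' (z : E) : ContDiff ℝ 1 (dirDeriv z w) := contDiff_dirDeriv hw (by norm_num) z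
  have space := integral_inner_dirDeriv_right (ν := ν) (hw' z) (hasCompactSupport_dirDeriv hsupp z)
    (hw' z') z'
  have time := integral_inner_dirDeriv_right (ν := ν) (hw' z') (hasCompactSupport_dirDeriv hsupp z')
    (hw' z') z
  simp only [real_inner_comm (dirDeriv z (dirDeriv z' w) _)] at time
  rw [space, dirDeriv_comm hw z' z]
  linarith

lemma integral_norm_dirDeriv_sq (hw : ContDiff ℝ 2 w) (hsupp : HasCompactSupport w)
    (z : E) :
    ∫ q, ‖dirDeriv z w q‖ ^ 2 ∂ν = -∫ q, ⟪w q, dirDeriv z (dirDeriv z w) q⟫ ∂ν := by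
  rw [integral_inner_dirDeriv_right (hw.of_le one_le_two) hsupp
    (contDiff_dirDeriv hw (by norm_num) z), neg_neg]
  simp only [real_inner_self_eq_norm_sq]

lemma mul_integral_norm_dirDeriv_sq_le (hw : ContDiff ℝ 2 w) (hsupp : HasCompactSupport w)
    (z : E) {μ κ : ℝ} (hμ : 0 ≤ μ) (hκ : 0 < κ) :
    μ * ∫ q, ‖dirDeriv z w q‖ ^ 2 ∂ν
      ≤ κ * ∫ q, ‖dirDeriv z (dirDeriv z w) q‖ ^ 2 ∂ν
        + μ ^ 2 / (4 * κ) * ∫ q, ‖w q‖ ^ 2 ∂ν := by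
  have hzz : Continuous (dirDeriv z (dirDeriv z w)) :=
    (contDiff_dirDeriv (m := 0) (contDiff_dirDeriv (m := 1) hw (by norm_num) z)
      (by norm_num) z).continuous
  have hzz_int := integrable_norm_sq_of_hasCompactSupport (ν := ν) hzz
    (hasCompactSupport_dirDeriv (hasCompactSupport_dirDeriv hsupp z) z)
  have hw_int := integrable_norm_sq_of_hasCompactSupport (ν := ν) hw.continuous hsupp
  rw [integral_norm_dirDeriv_sq hw hsupp, mul_neg, ← neg_mul, ← integral_const_mul,
    ← integral_const_mul, ← integral_const_mul,
    ← integral_add (hzz_int.const_mul κ) (hw_int.const_mul _)]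
  refine integral_mono
    ((integrable_inner_of_hasCompactSupport hw.continuous hsupp hzz).const_mul _)
    ((hzz_int.const_mul κ).add (hw_int.const_mul _)) fun q => ?_
  set x := w q
  set y := dirDeriv z (dirDeriv z w) q
  calc -μ * ⟪x, y⟫ = μ * -⟪x, y⟫ := by ring
    _ ≤ μ * (‖x‖ * ‖y‖) := by gcongr; exact (neg_le_abs _).trans (abs_real_inner_le_norm x y)
    _ = κ * ‖y‖ ^ 2 + μ ^ 2 / (4 * κ) * ‖x‖ ^ 2 - κ * (‖y‖ - μ / (2 * κ) * ‖x‖) ^ 2 := by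
        field_simp; ring
    _ ≤ κ * ‖y‖ ^ 2 + μ ^ 2 / (4 * κ) * ‖x‖ ^ 2 := sub_le_self _ (by positivity)

end IntegrationByParts

section SecondOrder

variable {δ μ : ℝ}

lemma CoeffBounds.norm_principal_sq_le (hδ : 0 < δ) (hμ : 0 ≤ μ) {a b c : ℝ}
    (habc : CoeffBounds δ μ a b c) {f wt wyy wy w : ℂ}
    (hf : f = wt + a * wyy + 2 * Complex.I * b * wy - c * w) :
    ‖wt + a * wyy‖ ^ 2
      ≤ 3 * ‖f‖ ^ 2 + 12 * δ⁻¹ ^ 3 * μ * ‖wy‖ ^ 2 + 3 * δ⁻¹ ^ 4 * μ ^ 2 * ‖w‖ ^ 2 := by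
  have first : ‖2 * Complex.I * b * wy‖ ^ 2 ≤ 4 * δ⁻¹ ^ 3 * μ * ‖wy‖ ^ 2 := by
    simp only [norm_mul, Complex.norm_I, Complex.norm_real, Real.norm_eq_abs, mul_pow, sq_abs,
      RCLike.norm_ofNat]
    nlinarith [mul_le_mul_of_nonneg_right (habc.sq_first_le hδ hμ) (sq_nonneg ‖wy‖)]
  have zeroth : ‖c * w‖ ^ 2 ≤ δ⁻¹ ^ 4 * μ ^ 2 * ‖w‖ ^ 2 := by
    rw [norm_mul, Complex.norm_real, Real.norm_eq_abs]
    calc (|c| * ‖w‖) ^ 2 ≤ (δ⁻¹ ^ 2 * μ * ‖w‖) ^ 2 := by gcongr; exact habc.abs_zeroth_le hδ hμ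
      _ = δ⁻¹ ^ 4 * μ ^ 2 * ‖w‖ ^ 2 := by ring
  have split : wt + a * wyy = f + -(2 * Complex.I * b * wy) + c * w := by rw [hf]; ring
  calc ‖wt + a * wyy‖ ^ 2
      ≤ 3 * (‖f‖ ^ 2 + ‖-(2 * Complex.I * b * wy)‖ ^ 2 + ‖c * w‖ ^ 2) := by
        rw [split]
        exact norm_add_add_sq_le _ _ _
    _ ≤ _ := by rw [norm_neg]; linarith

lemma CoeffBounds.norm_sq_add_norm_sq_le (hδ : 0 < δ) (hμ : 0 ≤ μ) {a b c : ℝ}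
    (habc : CoeffBounds δ μ a b c) {f wt wyy wy w : ℂ}
    (hf : f = wt + a * wyy + 2 * Complex.I * b * wy - c * w) :
    δ * ‖wt‖ ^ 2 + δ * ‖wyy‖ ^ 2 + 2 * ⟪wt, wyy⟫
      ≤ 3 * δ⁻¹ * ‖f‖ ^ 2 + 12 * δ⁻¹ ^ 4 * μ * ‖wy‖ ^ 2 + 3 * δ⁻¹ ^ 5 * μ ^ 2 * ‖w‖ ^ 2 := by
  obtain ⟨ha_lower, ha_upper⟩ := habc.mem_Icc
  have ha : 0 < a := hδ.trans_le ha_lower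
  calc δ * ‖wt‖ ^ 2 + δ * ‖wyy‖ ^ 2 + 2 * ⟪wt, wyy⟫
      ≤ a⁻¹ * ‖wt‖ ^ 2 + a * ‖wyy‖ ^ 2 + 2 * ⟪wt, wyy⟫ := by
        gcongr
        exact (le_inv_comm₀ hδ ha).mpr ha_upper
    _ = a⁻¹ * ‖wt + a * wyy‖ ^ 2 := by
        rw [← Complex.real_smul, norm_add_sq_real, inner_smul_right, norm_smul, mul_pow,
          Real.norm_eq_abs, sq_abs]
        field_simp
        ring
    _ ≤ δ⁻¹ * (3 * ‖f‖ ^ 2 + 12 * δ⁻¹ ^ 3 * μ * ‖wy‖ ^ 2 + 3 * δ⁻¹ ^ 4 * μ ^ 2 * ‖w‖ ^ 2) := by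
        gcongr
        exact habc.norm_principal_sq_le hδ hμ hf
    _ = _ := by ring

variable {a b c : ℝ × ℝ → ℝ} {w : ℝ × ℝ → ℂ}

lemma integral_norm_sq_add_integral_norm_sq_le (hδ : 0 < δ) (hμ : 0 ≤ μ) (ha : Measurable a)
    (hb : Measurable b) (hc : Measurable c) (habc : ∀ q, CoeffBounds δ μ (a q) (b q) (c q))
    (hw : ContDiff ℝ 2 w) (hsupp : HasCompactSupport w) :
    δ * (∫ q, ‖dirDeriv (1, 0) w q‖ ^ 2)
        + δ * (∫ q, ‖dirDeriv (0, 1) (dirDeriv (0, 1) w) q‖ ^ 2)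
      ≤ 3 * δ⁻¹ * (∫ q, ‖parabolicOp a b c w q‖ ^ 2)
        + 12 * δ⁻¹ ^ 4 * μ * (∫ q, ‖dirDeriv (0, 1) w q‖ ^ 2)
        + 3 * δ⁻¹ ^ 5 * μ ^ 2 * ∫ q, ‖w q‖ ^ 2 := by
  have hw' (z : ℝ × ℝ) : ContDiff ℝ 1 (dirDeriv z w) := contDiff_dirDeriv hw (by norm_num) z
  have hsupp' (z : ℝ × ℝ) := hasCompactSupport_dirDeriv hsupp z
  have hwyy := (contDiff_dirDeriv (m := 0) (hw' (0, 1)) (by norm_num) (0, 1)).continuous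
  have ht (z : ℝ × ℝ) := integrable_norm_sq_of_hasCompactSupport (ν := volume) (hw' z).continuous
    (hsupp' z)
  have hyy := integrable_norm_sq_of_hasCompactSupport (ν := volume) hwyy
    (hasCompactSupport_dirDeriv (hsupp' (0, 1)) (0, 1))
  have hcross := integrable_inner_of_hasCompactSupport (ν := volume) (hw' (1, 0)).continuous
    (hsupp' (1, 0)) hwyy
  have hf := (memLp_parabolicOp hδ hμ ha hb hc habc hw hsupp).norm.integrable_sq
  have h0 := integrable_norm_sq_of_hasCompactSupport (ν := volume) hw.continuous hsupp
  have pointwise := integral_mono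
    (((ht (1, 0)).const_mul δ).add (hyy.const_mul δ) |>.add (hcross.const_mul 2))
    ((hf.const_mul (3 * δ⁻¹)).add ((ht (0, 1)).const_mul (12 * δ⁻¹ ^ 4 * μ)) |>.add
      (h0.const_mul (3 * δ⁻¹ ^ 5 * μ ^ 2)))
    fun q => (habc q).norm_sq_add_norm_sq_le hδ hμ (f := parabolicOp a b c w q) rfl
  rw [integral_add' (((ht _).const_mul δ).add (hyy.const_mul δ)) (hcross.const_mul 2),
    integral_add' ((ht _).const_mul δ) (hyy.const_mul δ),
    integral_add' ((hf.const_mul _).add ((ht _).const_mul _)) (h0.const_mul _),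
    integral_add' (hf.const_mul _) ((ht _).const_mul _)] at pointwise
  simp only [integral_const_mul] at pointwise
  rwa [integral_inner_dirDeriv_dirDeriv_dirDeriv hw hsupp, mul_zero, add_zero] at pointwise

lemma add_add_add_le_of_energy_estimates (hδ : δ ∈ Set.Ioo (0 : ℝ) 1) {T Y₂ Y₁ W F : ℝ}
    (hT : 0 ≤ T) (hY₂ : 0 ≤ Y₂) (hF : 0 ≤ F) (zeroth : W ≤ 11 * δ⁻¹ ^ 4 * F)
    (first : Y₁ ≤ δ ^ 5 / 24 * Y₂ + 6 * δ⁻¹ ^ 5 * W)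
    (second : δ * T + δ * Y₂ ≤ 3 * δ⁻¹ * F + 12 * δ⁻¹ ^ 4 * Y₁ + 3 * δ⁻¹ ^ 5 * W) :
    T + Y₂ + W + Y₁ ≤ 2000 * δ⁻¹ ^ 14 * F := by
  obtain ⟨D, hD⟩ : ∃ D, D = δ⁻¹ := ⟨_, rfl⟩
  have hD1 : 1 ≤ D := hD ▸ (one_le_inv₀ hδ.1).mpr hδ.2.le
  have hδD : δ * D = 1 := hD ▸ mul_inv_cancel₀ hδ.1.ne'
  rw [← hD] at zeroth first second ⊢
  have pow_mul_le (k : ℕ) (hk : k ≤ 14) : D ^ k * F ≤ D ^ 14 * F := by gcongr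
  have hδ5 : δ ^ 5 * Y₂ ≤ Y₂ := mul_le_of_le_one_left hY₂ (pow_le_one₀ hδ.1.le hδ.2.le)
  have zeroth' (k : ℕ) (hk : k ≤ 10) : D ^ k * W ≤ 11 * (D ^ 14 * F) :=
    calc D ^ k * W ≤ D ^ k * (11 * D ^ 4 * F) := by gcongr
      _ = 11 * (D ^ (k + 4) * F) := by ring
      _ ≤ 11 * (D ^ 14 * F) := by gcongr 11 * ?_; exact pow_mul_le _ (by omega)
  have absorb : 12 * D ^ 5 * Y₁ ≤ Y₂ / 2 + 72 * (D ^ 10 * W) :=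
    calc 12 * D ^ 5 * Y₁ ≤ 12 * D ^ 5 * (δ ^ 5 / 24 * Y₂ + 6 * D ^ 5 * W) := by gcongr
      _ = (δ * D) ^ 5 * Y₂ / 2 + 72 * (D ^ 10 * W) := by ring
      _ = Y₂ / 2 + 72 * (D ^ 10 * W) := by rw [hδD]; ring
  have top_order : T + Y₂ ≤ 3 * (D ^ 2 * F) + 12 * D ^ 5 * Y₁ + 3 * (D ^ 6 * W) :=
    calc T + Y₂ = D * (δ * T + δ * Y₂) := by linear_combination (-T - Y₂) * hδD
      _ ≤ D * (3 * D * F + 12 * D ^ 4 * Y₁ + 3 * D ^ 5 * W) := by gcongr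
      _ = 3 * (D ^ 2 * F) + 12 * D ^ 5 * Y₁ + 3 * (D ^ 6 * W) := by ring
  have nonneg : 0 ≤ D ^ 14 * F := by positivity
  linarith [zeroth' 0 (by norm_num), zeroth' 5 (by norm_num), zeroth' 6 (by norm_num),
    zeroth' 10 le_rfl, pow_mul_le 2 (by norm_num)]

theorem integral_parabolic_estimate (hδ : δ ∈ Set.Ioo (0 : ℝ) 1) (hμ : 0 ≤ μ) (ha : Measurable a)
    (hb : Measurable b) (hc : Measurable c) (habc : ∀ q, CoeffBounds δ μ (a q) (b q) (c q))
    (hw : ContDiff ℝ 2 w) (hsupp : HasCompactSupport w) :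
    (∫ q, ‖dirDeriv (1, 0) w q‖ ^ 2) + (∫ q, ‖dirDeriv (0, 1) (dirDeriv (0, 1) w) q‖ ^ 2)
        + μ ^ 2 * (∫ q, ‖w q‖ ^ 2) + μ * (∫ q, ‖dirDeriv (0, 1) w q‖ ^ 2)
      ≤ 2000 * δ⁻¹ ^ 14 * ∫ q, ‖parabolicOp a b c w q‖ ^ 2 := by
  have zeroth := sq_mul_integral_norm_sq_le hδ hμ ha hb hc habc hw hsupp
  have second := integral_norm_sq_add_integral_norm_sq_le hδ.1 hμ ha hb hc habc hw hsupp
  have first := mul_integral_norm_dirDeriv_sq_le (ν := volume) hw hsupp (0, 1) hμ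
    (κ := δ ^ 5 / 24) (by have := hδ.1; positivity)
  have nonneg (v : ℝ × ℝ → ℂ) : 0 ≤ ∫ q, ‖v q‖ ^ 2 := integral_nonneg fun q => sq_nonneg _
  refine add_add_add_le_of_energy_estimates hδ (nonneg _) (nonneg _) (nonneg _) zeroth ?_ ?_
  · convert first using 2
    have := hδ.1.ne'
    field_simp
    ring
  · simpa only [mul_assoc] using second

end SecondOrder

section FiberIntegral

section Topological

variable {H X G : Type*} [TopologicalSpace H] [TopologicalSpace X] [NormedAddCommGroup G]

lemma hasCompactSupport_comp_prodMk [R1Space X] {g : H × X → G} (hsupp : HasCompactSupport g)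
    (q : H) : HasCompactSupport fun x => g (q, x) :=
  HasCompactSupport.intro (hsupp.isCompact.image continuous_snd) fun _ hx =>
    image_eq_zero_of_notMem_tsupport fun hqx => hx ⟨_, hqx, rfl⟩

variable [MeasurableSpace X] {ν : Measure X}

lemma hasCompactSupport_integral_prodMk [R1Space H] [NormedSpace ℝ G] {g : H × X → G}
    (hsupp : HasCompactSupport g) : HasCompactSupport fun q => ∫ x, g (q, x) ∂ν := by
  refine HasCompactSupport.intro (hsupp.isCompact.image continuous_fst) fun q hq => ?_
  have fiber_eq_zero (x : X) : g (q, x) = 0 :=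
    image_eq_zero_of_notMem_tsupport fun hqx => hq ⟨_, hqx, rfl⟩
  simp only [fiber_eq_zero, integral_zero]

variable [OpensMeasurableSpace X] [IsFiniteMeasureOnCompacts ν] {g : H × X → G}

lemma integrable_comp_prodMk [R1Space X] (hg : Continuous g) (hsupp : HasCompactSupport g)
    (q : H) : Integrable (fun x => g (q, x)) ν :=
  (hg.comp (Continuous.prodMk_right q)).integrable_of_hasCompactSupport
    (hasCompactSupport_comp_prodMk hsupp q)

lemma continuous_integral_prodMk [NormedSpace ℝ G] (hg : Continuous g)
    (hsupp : HasCompactSupport g) : Continuous fun q => ∫ x, g (q, x) ∂ν :=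
  continuousOn_univ.mp <| continuousOn_integral_of_compact_support (f := fun q x => g (q, x))
    (hsupp.isCompact.image continuous_snd) hg.continuousOn
    fun _ _ _ hx => image_eq_zero_of_notMem_tsupport fun hqx => hx ⟨_, hqx, rfl⟩

end Topological

variable {H X G : Type*} [NormedAddCommGroup H] [NormedSpace ℝ H] [NormedAddCommGroup X]
  [NormedAddCommGroup G] [NormedSpace ℝ G] [MeasurableSpace X] [BorelSpace X] {ν : Measure X}
  {g : H × X → G}

lemma hasFDerivAt_integral_prodMk [IsFiniteMeasureOnCompacts ν] {g' : H × X → H →L[ℝ] G}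
    (hg : Continuous g) (hsupp : HasCompactSupport g) (hg' : Continuous g')
    (hsupp' : HasCompactSupport g') (hderiv : ∀ q x, HasFDerivAt (fun q => g (q, x)) (g' (q, x)) q)
    (q : H) : HasFDerivAt (fun q => ∫ x, g (q, x) ∂ν) (∫ x, g' (q, x) ∂ν) q := by
  obtain ⟨C, hC⟩ := hg'.bounded_above_of_compact_support hsupp'
  have hK : IsCompact (Prod.snd '' tsupport g') := hsupp'.isCompact.image continuous_snd
  have bound (x : X) (p : H) :
      ‖g' (p, x)‖ ≤ (Prod.snd '' tsupport g').indicator (fun _ => C) x := by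
    by_cases hx : x ∈ Prod.snd '' tsupport g'
    · rw [Set.indicator_of_mem hx]
      exact hC (p, x)
    · rw [Set.indicator_of_notMem hx,
        image_eq_zero_of_notMem_tsupport fun hpx => hx ⟨(p, x), hpx, rfl⟩, norm_zero]
  exact hasFDerivAt_integral_of_dominated_of_fderiv_le (F := fun q x => g (q, x))
    (F' := fun q x => g' (q, x)) univ_mem
    (.of_forall fun q => (integrable_comp_prodMk hg hsupp q).1) (integrable_comp_prodMk hg hsupp q)
    (integrable_comp_prodMk hg' hsupp' q).1 (.of_forall fun x p _ => bound x p)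
    ((integrable_indicator_iff hK.measurableSet).mpr (integrableOn_const hK.measure_lt_top.ne))
    (.of_forall fun x p _ => hderiv p x)

variable [NormedSpace ℝ X]

lemma hasFDerivAt_integral_prodMk_of_contDiff [IsFiniteMeasureOnCompacts ν]
    (hg : ContDiff ℝ 1 g) (hsupp : HasCompactSupport g) (q : H) :
    ∃ L : H →L[ℝ] G, HasFDerivAt (fun q => ∫ x, g (q, x) ∂ν) L q ∧
      ∀ z, L z = ∫ x, dirDeriv (z, 0) g (q, x) ∂ν := by
  have hg' : Continuous fun p => (fderiv ℝ g p).comp (.inl ℝ H X) :=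
    (hg.continuous_fderiv one_ne_zero).clm_comp continuous_const
  have hsupp' : HasCompactSupport fun p => (fderiv ℝ g p).comp (.inl ℝ H X) :=
    (hsupp.fderiv ℝ).mono fun p hp h => hp (by simp only [h, ContinuousLinearMap.zero_comp])
  refine ⟨_, hasFDerivAt_integral_prodMk hg.continuous hsupp hg' hsupp' (fun p x => ?_) q,
    ContinuousLinearMap.integral_apply (integrable_comp_prodMk hg' hsupp' q)⟩
  exact (hg.differentiable one_ne_zero (p, x)).hasFDerivAt.comp p (hasFDerivAt_prodMk_left p x)

lemma dirDeriv_integral_prodMk [IsFiniteMeasureOnCompacts ν] (hg : ContDiff ℝ 1 g)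
    (hsupp : HasCompactSupport g) (z : H) :
    dirDeriv z (fun q => ∫ x, g (q, x) ∂ν) = fun q => ∫ x, dirDeriv (z, 0) g (q, x) ∂ν := by
  ext q
  obtain ⟨L, hL, hL_apply⟩ := hasFDerivAt_integral_prodMk_of_contDiff (ν := ν) hg hsupp q
  rw [dirDeriv, hL.fderiv, hL_apply]

lemma contDiff_integral_prodMk [IsFiniteMeasureOnCompacts ν] [FiniteDimensional ℝ H] {m : ℕ}
    (hg : ContDiff ℝ m g) (hsupp : HasCompactSupport g) :
    ContDiff ℝ m fun q => ∫ x, g (q, x) ∂ν := by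
  induction m generalizing g with
  | zero => exact contDiff_zero.mpr (continuous_integral_prodMk hg.continuous hsupp)
  | succ m ih =>
    have hg1 : ContDiff ℝ 1 g := hg.of_le (by norm_cast; omega)
    have hdiff : Differentiable ℝ fun q => ∫ x, g (q, x) ∂ν := fun q =>
      have ⟨_, hL, _⟩ := hasFDerivAt_integral_prodMk_of_contDiff hg1 hsupp q
      hL.differentiableAt
    have fderiv_apply (z : H) : ContDiff ℝ m (dirDeriv z fun q => ∫ x, g (q, x) ∂ν) := by
      rw [dirDeriv_integral_prodMk hg1 hsupp]
      exact ih (contDiff_dirDeriv hg (by norm_cast) _) (hasCompactSupport_dirDeriv hsupp _)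
    exact contDiff_succ_iff_fderiv.mpr ⟨hdiff, by simp, contDiff_clm_apply_iff.mpr fderiv_apply⟩

lemma integral_dirDeriv_fiber_eq_zero [FiniteDimensional ℝ X] [ν.IsAddHaarMeasure]
    (hg : ContDiff ℝ 1 g) (hsupp : HasCompactSupport g) (q : H) (z : X) :
    ∫ x, dirDeriv (0, z) g (q, x) ∂ν = 0 := by
  have hderiv (x : X) : HasFDerivAt (fun x => g (q, x))
      ((fderiv ℝ g (q, x)).comp (.inr ℝ H X)) x :=
    (hg.differentiable one_ne_zero _).hasFDerivAt.comp x (hasFDerivAt_prodMk_right q x)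
  have integrable : Integrable (fun x => dirDeriv (0, z) g (q, x)) ν :=
    integrable_comp_prodMk (contDiff_dirDeriv (m := 0) hg (by norm_num) _).continuous
      (hasCompactSupport_dirDeriv hsupp _) q
  simpa [dirDeriv] using integral_bilinear_hasFDerivAt_right_eq_neg_left_of_integrable (μ := ν)
    (B := .lsmul ℝ ℝ) (f := fun _ => (1 : ℝ)) (f' := fun _ => 0) (v := z) (by simp)
    (by simpa [dirDeriv] using integrable)
    (by simpa using integrable_comp_prodMk hg.continuous hsupp q)
    (fun x _ => hasFDerivAt_const 1 x) (fun x _ => hderiv x)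

end FiberIntegral

section PartialFourier

variable {n : ℕ}

/-- The splitting `x = (x¹, x')` of the space variables, as an isomorphism from the coordinates
`((t, x¹), x')` to the coordinates `(t, x)`. -/
noncomputable def splitCoord (n : ℕ) : ((ℝ × ℝ) × (Fin n → ℝ)) ≃L[ℝ] ℝ × (Fin (n + 1) → ℝ) :=
  (ContinuousLinearEquiv.prodAssoc ℝ ℝ ℝ (Fin n → ℝ)).trans
    ((ContinuousLinearEquiv.refl ℝ ℝ).prodCongr (Fin.consEquivL ℝ fun _ => ℝ))

/-- The integrand of `fourierSlice ξ v`, in the coordinates `((t, x¹), x')`. -/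
noncomputable def fourierIntegrand (ξ : Fin n → ℝ) (v : ℝ × (Fin (n + 1) → ℝ) → ℝ)
    (p : (ℝ × ℝ) × (Fin n → ℝ)) : ℂ :=
  (v (splitCoord n p) : ℂ) * Complex.exp (-Complex.I * ((∑ j, ξ j * p.2 j : ℝ) : ℂ))

/-- The partial Fourier transform at a fixed frequency `ξ`, as a function of `q = (t, x¹)`. -/
noncomputable def fourierSlice (ξ : Fin n → ℝ) (v : ℝ × (Fin (n + 1) → ℝ) → ℝ) (q : ℝ × ℝ) : ℂ :=
  pFourier v q.1 q.2 ξ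

lemma splitCoord_apply (p : (ℝ × ℝ) × (Fin n → ℝ)) :
    splitCoord n p = (p.1.1, Fin.cons p.1.2 p.2) :=
  rfl

lemma splitCoord_time : splitCoord n ((1, 0), 0) = (1, 0) := by
  rw [splitCoord_apply]
  exact congrArg _ (funext <| Fin.cases rfl fun _ => rfl)

lemma splitCoord_first : splitCoord n ((0, 1), 0) = (0, Pi.single 0 1) := by
  rw [splitCoord_apply]
  exact congrArg _ (funext <| Fin.cases rfl fun _ => rfl)

lemma splitCoord_succ (j : Fin n) : splitCoord n (0, Pi.single j 1) = (0, Pi.single j.succ 1) := by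
  rw [splitCoord_apply]
  refine congrArg _ (funext <| Fin.cases rfl fun i => ?_)
  simp [Pi.single_apply]

variable {ξ : Fin n → ℝ} {v : ℝ × (Fin (n + 1) → ℝ) → ℝ}

lemma fourierSlice_eq_integral :
    fourierSlice ξ v = fun q => ∫ x', fourierIntegrand ξ v (q, x') :=
  rfl

lemma contDiff_fourierIntegrand {m : WithTop ℕ∞} (hv : ContDiff ℝ m v) :
    ContDiff ℝ m (fourierIntegrand ξ v) := by
  have phase : ContDiff ℝ m fun p : (ℝ × ℝ) × (Fin n → ℝ) => ∑ j, ξ j * p.2 j := by fun_prop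
  exact (Complex.ofRealCLM.contDiff.comp (hv.comp (splitCoord n).contDiff)).mul
    (contDiff_const.mul (Complex.ofRealCLM.contDiff.comp phase)).cexp

lemma hasCompactSupport_fourierIntegrand (hsupp : HasCompactSupport v) :
    HasCompactSupport (fourierIntegrand ξ v) :=
  (hsupp.comp_homeomorph (splitCoord n).toHomeomorph).mono fun p hp hvp =>
    hp (by
      have : v (splitCoord n p) = 0 := hvp
      simp [fourierIntegrand, this])

lemma dirDeriv_fourierIntegrand (hv : Differentiable ℝ v) (z p : (ℝ × ℝ) × (Fin n → ℝ)) :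
    dirDeriv z (fourierIntegrand ξ v) p = fourierIntegrand ξ (dirDeriv (splitCoord n z) v) p
      - Complex.I * ((∑ j, ξ j * z.2 j : ℝ) : ℂ) * fourierIntegrand ξ v p := by
  have amplitude : HasFDerivAt (fun p => (v (splitCoord n p) : ℂ))
      (Complex.ofRealCLM ∘L (fderiv ℝ v (splitCoord n p) ∘L (splitCoord n : _ →L[ℝ] _))) p :=
    Complex.ofRealCLM.hasFDerivAt.comp p
      ((hv _).hasFDerivAt.comp p (splitCoord n).hasFDerivAt)
  let phase : (ℝ × ℝ) × (Fin n → ℝ) →L[ℝ] ℝ :=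
    (∑ j, ξ j • ContinuousLinearMap.proj j) ∘L .snd ℝ (ℝ × ℝ) (Fin n → ℝ)
  have phase_apply (p) : phase p = ∑ j, ξ j * p.2 j := by simp [phase]
  have oscillation := ((Complex.ofRealCLM ∘L phase).hasFDerivAt (x := p)).const_mul (-Complex.I)
    |>.cexp
  simp only [ContinuousLinearMap.comp_apply, phase_apply, Complex.ofRealCLM_apply] at oscillation
  have product : fderiv ℝ (fourierIntegrand ξ v) p = _ := (amplitude.mul oscillation).fderiv
  rw [dirDeriv, product]
  simp only [add_apply, smul_apply, smul_eq_mul, ContinuousLinearMap.comp_apply, phase_apply,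
    Complex.ofRealCLM_apply, fourierIntegrand, dirDeriv, ContinuousLinearEquiv.coe_coe]
  ring

lemma integrable_fourierIntegrand (hv : Continuous v) (hsupp : HasCompactSupport v) (q : ℝ × ℝ) :
    Integrable fun x' => fourierIntegrand ξ v (q, x') :=
  integrable_comp_prodMk (contDiff_fourierIntegrand (contDiff_zero.mpr hv)).continuous
    (hasCompactSupport_fourierIntegrand hsupp) q

lemma contDiff_fourierSlice {m : ℕ} (hv : ContDiff ℝ m v) (hsupp : HasCompactSupport v) :
    ContDiff ℝ m (fourierSlice ξ v) := by
  rw [fourierSlice_eq_integral]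
  exact contDiff_integral_prodMk (contDiff_fourierIntegrand hv)
    (hasCompactSupport_fourierIntegrand hsupp)

lemma hasCompactSupport_fourierSlice (hsupp : HasCompactSupport v) :
    HasCompactSupport (fourierSlice ξ v) := by
  rw [fourierSlice_eq_integral]
  exact hasCompactSupport_integral_prodMk (hasCompactSupport_fourierIntegrand hsupp)

lemma dirDeriv_fourierSlice (hv : ContDiff ℝ 1 v) (hsupp : HasCompactSupport v) (z : ℝ × ℝ) :
    dirDeriv z (fourierSlice ξ v) = fourierSlice ξ (dirDeriv (splitCoord n (z, 0)) v) := by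
  rw [fourierSlice_eq_integral, dirDeriv_integral_prodMk (contDiff_fourierIntegrand hv)
    (hasCompactSupport_fourierIntegrand hsupp)]
  simp [dirDeriv_fourierIntegrand (hv.differentiable one_ne_zero), fourierSlice_eq_integral]

lemma dirDeriv_fst_fourierSlice (hv : ContDiff ℝ 1 v) (hsupp : HasCompactSupport v) :
    dirDeriv (1, 0) (fourierSlice ξ v) = fourierSlice ξ (pdt v) := by
  rw [dirDeriv_fourierSlice hv hsupp, splitCoord_time]
  rfl

lemma dirDeriv_snd_fourierSlice (hv : ContDiff ℝ 1 v) (hsupp : HasCompactSupport v) :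
    dirDeriv (0, 1) (fourierSlice ξ v) = fourierSlice ξ (pdx 0 v) := by
  rw [dirDeriv_fourierSlice hv hsupp, splitCoord_first]
  rfl

lemma fourierSlice_pdx_succ (hv : ContDiff ℝ 1 v) (hsupp : HasCompactSupport v) (j : Fin n) :
    fourierSlice ξ (pdx j.succ v) = fun q => Complex.I * ξ j * fourierSlice ξ v q := by
  ext q
  have integral_eq_zero := integral_dirDeriv_fiber_eq_zero (ν := volume)
    (contDiff_fourierIntegrand (ξ := ξ) hv) (hasCompactSupport_fourierIntegrand hsupp) q
    (Pi.single j 1)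
  have integrable : Integrable fun x' =>
      fourierIntegrand ξ (dirDeriv (0, Pi.single j.succ 1) v) (q, x') :=
    integrable_fourierIntegrand (contDiff_dirDeriv (m := 0) hv (by norm_num) _).continuous
      (hasCompactSupport_dirDeriv hsupp _) q
  simp only [dirDeriv_fourierIntegrand (hv.differentiable one_ne_zero), splitCoord_succ]
    at integral_eq_zero
  rw [integral_sub integrable ((integrable_fourierIntegrand hv.continuous hsupp q).const_mul _),
    integral_const_mul, sub_eq_zero] at integral_eq_zero
  have frequency : ∑ i, ξ i * (Pi.single j 1 : Fin n → ℝ) i = ξ j := by simp [Pi.single_apply]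
  rwa [frequency] at integral_eq_zero

lemma pFourierT_eq_dirDeriv (hv : ContDiff ℝ 1 v) (hsupp : HasCompactSupport v) (q : ℝ × ℝ) :
    pFourierT v q.1 q.2 ξ = dirDeriv (1, 0) (fourierSlice ξ v) q := by
  have line : HasDerivAt (fun s : ℝ => (s, q.2)) (1, 0) q.1 :=
    (hasDerivAt_id _).prodMk (hasDerivAt_const _ _)
  have hdiff := (contDiff_fourierSlice (m := 1) (ξ := ξ) hv hsupp).differentiable one_ne_zero q
  exact (hdiff.hasFDerivAt.comp_hasDerivAt q.1 line).deriv

lemma pFourierX_eq_dirDeriv (hv : ContDiff ℝ 1 v) (hsupp : HasCompactSupport v) (q : ℝ × ℝ) :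
    pFourierX v q.1 q.2 ξ = dirDeriv (0, 1) (fourierSlice ξ v) q := by
  have line : HasDerivAt (fun y : ℝ => (q.1, y)) (0, 1) q.2 :=
    (hasDerivAt_const _ _).prodMk (hasDerivAt_id _)
  have hdiff := (contDiff_fourierSlice (m := 1) (ξ := ξ) hv hsupp).differentiable one_ne_zero q
  exact (hdiff.hasFDerivAt.comp_hasDerivAt q.2 line).deriv

lemma pFourierXX_eq_dirDeriv (hv : ContDiff ℝ 2 v) (hsupp : HasCompactSupport v) (q : ℝ × ℝ) :
    pFourierXX v q.1 q.2 ξ = dirDeriv (0, 1) (dirDeriv (0, 1) (fourierSlice ξ v)) q := by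
  have hv1 : ContDiff ℝ 1 v := hv.of_le one_le_two
  have slice : (fun y => pFourierX v q.1 y ξ) = fun y => pFourier (pdx 0 v) q.1 y ξ := by
    ext y
    rw [pFourierX_eq_dirDeriv hv1 hsupp (q.1, y), dirDeriv_snd_fourierSlice hv1 hsupp]
    rfl
  rw [dirDeriv_snd_fourierSlice hv1 hsupp, ← pFourierX_eq_dirDeriv (v := pdx 0 v)
    (contDiff_dirDeriv hv (by norm_num) _) (hasCompactSupport_dirDeriv hsupp _), pFourierXX, slice]
  rfl

lemma fourierSlice_add_sum_sub {ι : Type*} (s : Finset ι) {v₀ v₁ : ℝ × (Fin (n + 1) → ℝ) → ℝ}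
    {w : ι → ℝ × (Fin (n + 1) → ℝ) → ℝ} (hv₀ : Continuous v₀) (hv₀_supp : HasCompactSupport v₀)
    (hv₁ : Continuous v₁) (hv₁_supp : HasCompactSupport v₁) (hw : ∀ i, Continuous (w i))
    (hw_supp : ∀ i, HasCompactSupport (w i)) (α : ι → ℝ × ℝ → ℝ) (β : ℝ) (q : ℝ × ℝ) :
    fourierSlice ξ (fun p => v₀ p + ∑ i ∈ s, α i (p.1, p.2 0) * w i p - β * v₁ p) q
      = fourierSlice ξ v₀ q + ∑ i ∈ s, α i q * fourierSlice ξ (w i) q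
        - β * fourierSlice ξ v₁ q := by
  have integrand_eq (x' : Fin n → ℝ) :
      fourierIntegrand ξ (fun p => v₀ p + ∑ i ∈ s, α i (p.1, p.2 0) * w i p - β * v₁ p) (q, x')
        = fourierIntegrand ξ v₀ (q, x') + ∑ i ∈ s, α i q * fourierIntegrand ξ (w i) (q, x')
          - β * fourierIntegrand ξ v₁ (q, x') := by
    have base : ((splitCoord n (q, x')).1, (splitCoord n (q, x')).2 0) = q := rfl
    simp only [fourierIntegrand, base]
    push_cast
    simp only [sub_mul, add_mul, Finset.sum_mul, mul_assoc]
  have integrable (i : ι) : Integrable fun x' => (α i q : ℂ) * fourierIntegrand ξ (w i) (q, x') :=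
    (integrable_fourierIntegrand (hw i) (hw_supp i) q).const_mul _
  have integrable₀ := integrable_fourierIntegrand (ξ := ξ) hv₀ hv₀_supp q
  have integrable₁ := (integrable_fourierIntegrand (ξ := ξ) hv₁ hv₁_supp q).const_mul (β : ℂ)
  have integrable_sum := integrable_finsetSum s fun i _ => integrable i
  simp only [fourierSlice_eq_integral, integrand_eq]
  rw [integral_sub (by exact integrable₀.add integrable_sum) integrable₁,
    integral_add integrable₀ integrable_sum, integral_finsetSum s fun i _ => integrable i]
  simp only [integral_const_mul]

end PartialFourier

section EllipticCoefficients

variable {n : ℕ} {δ lam : ℝ} {ξ : Fin n → ℝ} {A : Fin (n + 1) → Fin (n + 1) → ℝ}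

/-- The coefficient `b` for which `2 i b ∂_{x¹}` is the part of the operator mixing `x¹` and `x'`
after the Fourier transform in `x'`. -/
noncomputable def mixedCoeff (A : Fin (n + 1) → Fin (n + 1) → ℝ) (ξ : Fin n → ℝ) : ℝ :=
  (∑ i, (A 0 i.succ + A i.succ 0) * ξ i) / 2

/-- The quadratic form of `A` on the hyperplane `θ¹ = 0`. -/
def transverseForm (A : Fin (n + 1) → Fin (n + 1) → ℝ) (ξ : Fin n → ℝ) : ℝ :=
  ∑ i, ∑ j, A i.succ j.succ * ξ i * ξ j

lemma sum_mul_cons_mul_cons (A : Fin (n + 1) → Fin (n + 1) → ℝ) (ξ : Fin n → ℝ) (r s : ℝ) :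
    ∑ j, ∑ k, A j k * (Fin.cons r (s • ξ) : Fin (n + 1) → ℝ) j
        * (Fin.cons r (s • ξ) : Fin (n + 1) → ℝ) k
      = A 0 0 * r ^ 2 + 2 * mixedCoeff A ξ * r * s + transverseForm A ξ * s ^ 2 := by
  have mixed : 2 * mixedCoeff A ξ * r * s
      = ∑ i, A 0 i.succ * r * (s * ξ i) + ∑ i, A i.succ 0 * (s * ξ i) * r := by
    rw [mixedCoeff, mul_div_cancel₀ _ two_ne_zero, Finset.sum_mul, Finset.sum_mul,
      ← Finset.sum_add_distrib]
    exact Finset.sum_congr rfl fun i _ => by ring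
  have transverse : transverseForm A ξ * s ^ 2
      = ∑ i, ∑ j, A i.succ j.succ * (s * ξ i) * (s * ξ j) := by
    simp only [transverseForm, Finset.sum_mul]
    exact Finset.sum_congr rfl fun i _ => Finset.sum_congr rfl fun j _ => by ring
  rw [mixed, transverse]
  simp only [Fin.sum_univ_succ, Fin.cons_zero, Fin.cons_succ, Finset.sum_add_distrib,
    Pi.smul_apply, smul_eq_mul]
  ring

lemma coeffBounds_of_elliptic (hδ : δ ∈ Set.Ioo (0 : ℝ) 1) (hlam : 0 ≤ lam)
    (hA : ∀ θ : Fin (n + 1) → ℝ, δ * ∑ j, θ j ^ 2 ≤ ∑ j, ∑ k, A j k * θ j * θ k ∧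
      ∑ j, ∑ k, A j k * θ j * θ k ≤ δ⁻¹ * ∑ j, θ j ^ 2) :
    CoeffBounds δ (δ * ∑ j, ξ j ^ 2 + lam) (A 0 0) (mixedCoeff A ξ)
      (transverseForm A ξ + lam) := by
  obtain ⟨X, hX⟩ : ∃ X, X = ∑ j, ξ j ^ 2 := ⟨_, rfl⟩
  have binary (r s : ℝ) := hA (Fin.cons r (s • ξ))
  have norm_sq (r s : ℝ) :
      ∑ j, (Fin.cons r (s • ξ) : Fin (n + 1) → ℝ) j ^ 2 = r ^ 2 + s ^ 2 * X := by
    simp [Fin.sum_univ_succ, mul_pow, hX, Finset.mul_sum]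
  simp only [sum_mul_cons_mul_cons, norm_sq] at binary
  rw [← hX]
  obtain ⟨b, hb⟩ : ∃ b, b = mixedCoeff A ξ := ⟨_, rfl⟩
  obtain ⟨c, hc⟩ : ∃ c, c = transverseForm A ξ := ⟨_, rfl⟩
  rw [← hb, ← hc] at binary ⊢
  have hA_mem : A 0 0 ∈ Set.Icc δ δ⁻¹ := by
    constructor <;> linarith [(binary 1 0).1, (binary 1 0).2]
  have hc_le : c ≤ δ⁻¹ * X := by linarith [(binary 0 1).2]
  have inv_one : 1 ≤ δ⁻¹ := (one_le_inv₀ hδ.1).mpr hδ.2.le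
  refine ⟨hA_mem, ?_, ?_⟩
  · -- The form minus `δ|θ|²` is nonnegative at `θ = (b, -A₀₀ ξ)`, near its minimizing direction.
    have hA_pos : 0 < A 0 0 := hδ.1.trans_le hA_mem.1
    refine le_of_mul_le_mul_left ?_ hA_pos
    have := (binary b (-A 0 0)).1
    nlinarith [mul_nonneg hδ.1.le (sq_nonneg b)]
  · calc c + lam ≤ δ⁻¹ * X + δ⁻¹ ^ 2 * lam :=
        add_le_add hc_le (le_mul_of_one_le_left hlam (one_le_pow₀ inv_one))
      _ = δ⁻¹ ^ 2 * (δ * X + lam) := by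
        have := hδ.1.ne'
        field_simp

end EllipticCoefficients

section Operator

variable {n : ℕ} {u : ℝ × (Fin (n + 1) → ℝ) → ℝ} {ξ : Fin n → ℝ}

lemma sum_mul_eq_of_second_derivatives (A : Fin (n + 1) → Fin (n + 1) → ℝ)
    {D : Fin (n + 1) → Fin (n + 1) → ℂ} {w w₁ : ℂ}
    (hrow : ∀ i, D 0 (Fin.succ i) = Complex.I * ξ i * w₁)
    (hcol : ∀ i, D (Fin.succ i) 0 = Complex.I * ξ i * w₁)
    (hsucc : ∀ i j, D (Fin.succ i) (Fin.succ j) = Complex.I * ξ i * (Complex.I * ξ j * w)) :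
    ∑ j, ∑ k, A j k * D j k
      = A 0 0 * D 0 0 + 2 * Complex.I * mixedCoeff A ξ * w₁ - transverseForm A ξ * w := by
  have mixed : 2 * Complex.I * mixedCoeff A ξ * w₁
      = ∑ i : Fin n, A 0 i.succ * D 0 i.succ + ∑ i : Fin n, A i.succ 0 * D i.succ 0 := by
    have double : (2 * mixedCoeff A ξ : ℂ) = ∑ i, (A 0 i.succ + A i.succ 0) * ξ i := by
      simp [mixedCoeff, mul_div_cancel₀]
    calc 2 * Complex.I * mixedCoeff A ξ * w₁ = (2 * mixedCoeff A ξ) * (Complex.I * w₁) := by ring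
      _ = ∑ i : Fin n, (A 0 i.succ * D 0 i.succ + A i.succ 0 * D i.succ 0) := by
        rw [double, Complex.ofReal_sum, Finset.sum_mul]
        exact Finset.sum_congr rfl fun i _ => by rw [hrow, hcol]; push_cast; ring
      _ = _ := Finset.sum_add_distrib
  have transverse : -(transverseForm A ξ * w)
      = ∑ i : Fin n, ∑ j : Fin n, A i.succ j.succ * D i.succ j.succ := by
    simp only [transverseForm, Complex.ofReal_sum, Finset.sum_mul, ← Finset.sum_neg_distrib]
    refine Finset.sum_congr rfl fun i _ => Finset.sum_congr rfl fun j _ => ?_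
    rw [hsucc]
    push_cast
    linear_combination -(A i.succ j.succ * ξ i * ξ j * w) * Complex.I_mul_I
  rw [sub_eq_add_neg, mixed, transverse]
  simp only [Fin.sum_univ_succ, Finset.sum_add_distrib]
  ring

lemma fourierSlice_operator (hu : ContDiff ℝ 2 u) (hsupp : HasCompactSupport u)
    (a : ℝ × ℝ → Fin (n + 1) → Fin (n + 1) → ℝ) (lam : ℝ) :
    fourierSlice ξ (fun p => pdt u p + (∑ j, ∑ k, a (p.1, p.2 0) j k * pdxx j k u p) - lam * u p)
      = parabolicOp (fun q => a q 0 0) (fun q => mixedCoeff (a q) ξ)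
          (fun q => transverseForm (a q) ξ + lam) (fourierSlice ξ u) := by
  ext q
  have hu1 : ContDiff ℝ 1 u := hu.of_le one_le_two
  have hpdx (k) : ContDiff ℝ 1 (pdx k u) := contDiff_dirDeriv hu (by norm_num) _
  have hpdx_supp (k) : HasCompactSupport (pdx k u) := hasCompactSupport_dirDeriv hsupp _
  have col (i : Fin n) : fourierSlice ξ (pdxx i.succ 0 u) q
      = Complex.I * ξ i * dirDeriv (0, 1) (fourierSlice ξ u) q := by
    rw [pdxx, fourierSlice_pdx_succ (hpdx 0) (hpdx_supp 0), dirDeriv_snd_fourierSlice hu1 hsupp]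
  have row (i : Fin n) : fourierSlice ξ (pdxx 0 i.succ u) q
      = Complex.I * ξ i * dirDeriv (0, 1) (fourierSlice ξ u) q := by
    rw [← col]
    exact congrArg (fourierSlice ξ · q) (dirDeriv_comm hu _ _)
  have succ_succ (i j : Fin n) : fourierSlice ξ (pdxx i.succ j.succ u) q
      = Complex.I * ξ i * (Complex.I * ξ j * fourierSlice ξ u q) := by
    rw [pdxx, fourierSlice_pdx_succ (hpdx _) (hpdx_supp _), fourierSlice_pdx_succ hu1 hsupp]
  have linear := fourierSlice_add_sum_sub (ξ := ξ) Finset.univ (v₀ := pdt u) (v₁ := u)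
    (w := fun jk : Fin (n + 1) × Fin (n + 1) => pdxx jk.1 jk.2 u)
    (contDiff_dirDeriv (m := 1) hu (by norm_num) _).continuous (hasCompactSupport_dirDeriv hsupp _)
    hu.continuous hsupp (fun jk => (contDiff_dirDeriv (m := 0) (hpdx _) (by norm_num) _).continuous)
    (fun jk => hasCompactSupport_dirDeriv (hpdx_supp _) _) (fun jk q => a q jk.1 jk.2) lam q
  simp only [Fintype.sum_prod_type] at linear
  rw [linear, sum_mul_eq_of_second_derivatives (a q) row col succ_succ, parabolicOp,
    dirDeriv_fst_fourierSlice hu1 hsupp, dirDeriv_snd_fourierSlice hu1 hsupp,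
    dirDeriv_snd_fourierSlice (hpdx 0) (hpdx_supp 0)]
  simp only [pdxx]
  push_cast
  ring

end Operator

lemma add_add_add_le_of_rescaled {δ X lam T Y₂ W Y₁ : ℝ} (hδ : δ ∈ Set.Ioo (0 : ℝ) 1)
    (hX : 0 ≤ X) (hlam : 0 ≤ lam) (hT : 0 ≤ T) (hY₂ : 0 ≤ Y₂) (hW : 0 ≤ W) (hY₁ : 0 ≤ Y₁) :
    T + Y₂ + (X ^ 2 + lam ^ 2) * W + (X + lam) * Y₁
      ≤ δ⁻¹ ^ 2 * (T + Y₂ + (δ * X + lam) ^ 2 * W + (δ * X + lam) * Y₁) := by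
  have inv_one : 1 ≤ δ⁻¹ := (one_le_inv₀ hδ.1).mpr hδ.2.le
  have sq_one : 1 ≤ δ⁻¹ ^ 2 := one_le_pow₀ inv_one
  have hμ : 0 ≤ δ * X + lam := add_nonneg (mul_nonneg hδ.1.le hX) hlam
  have first : X + lam ≤ δ⁻¹ * (δ * X + lam) := by
    rw [mul_add, inv_mul_cancel_left₀ hδ.1.ne']
    exact add_le_add_right (le_mul_of_one_le_left hlam inv_one) X
  have second : X ^ 2 + lam ^ 2 ≤ δ⁻¹ ^ 2 * (δ * X + lam) ^ 2 :=
    calc X ^ 2 + lam ^ 2 ≤ (X + lam) ^ 2 := by nlinarith [mul_nonneg hX hlam]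
      _ ≤ (δ⁻¹ * (δ * X + lam)) ^ 2 := by gcongr
      _ = δ⁻¹ ^ 2 * (δ * X + lam) ^ 2 := mul_pow _ _ _
  have first' : X + lam ≤ δ⁻¹ ^ 2 * (δ * X + lam) :=
    first.trans (by gcongr; exact le_self_pow₀ inv_one two_ne_zero)
  calc T + Y₂ + (X ^ 2 + lam ^ 2) * W + (X + lam) * Y₁
      ≤ δ⁻¹ ^ 2 * T + δ⁻¹ ^ 2 * Y₂ + δ⁻¹ ^ 2 * (δ * X + lam) ^ 2 * W
          + δ⁻¹ ^ 2 * (δ * X + lam) * Y₁ := by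
        gcongr
        exacts [le_mul_of_one_le_left hT sq_one, le_mul_of_one_le_left hY₂ sq_one]
    _ = δ⁻¹ ^ 2 * (T + Y₂ + (δ * X + lam) ^ 2 * W + (δ * X + lam) * Y₁) := by ring

theorem stmt5_general {n : ℕ} {δ : ℝ} (hδ : δ ∈ Set.Ioo (0 : ℝ) 1)
    {a : ℝ × ℝ → Fin (n + 1) → Fin (n + 1) → ℝ} (ha : ∀ j k, Measurable fun q => a q j k)
    (helliptic : ∀ (q : ℝ × ℝ) (θ : Fin (n + 1) → ℝ),
      δ * ∑ j, (θ j) ^ 2 ≤ ∑ j, ∑ k, a q j k * θ j * θ k ∧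
      ∑ j, ∑ k, a q j k * θ j * θ k ≤ δ⁻¹ * ∑ j, (θ j) ^ 2)
    {u : ℝ × (Fin (n + 1) → ℝ) → ℝ} (hu : ContDiff ℝ 2 u) (hsupp : HasCompactSupport u)
    {lam : ℝ} (hlam : 0 ≤ lam) (ξ : Fin n → ℝ) :
    (∫ q : ℝ × ℝ, ‖pFourierT u q.1 q.2 ξ‖ ^ 2)
        + (∫ q : ℝ × ℝ, ‖pFourierXX u q.1 q.2 ξ‖ ^ 2)
        + ((∑ j, (ξ j) ^ 2) ^ 2 + lam ^ 2) * (∫ q : ℝ × ℝ, ‖pFourier u q.1 q.2 ξ‖ ^ 2)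
        + ((∑ j, (ξ j) ^ 2) + lam) * (∫ q : ℝ × ℝ, ‖pFourierX u q.1 q.2 ξ‖ ^ 2)
      ≤ 2000 * δ⁻¹ ^ 16 * ∫ q : ℝ × ℝ,
          ‖pFourier (fun p => pdt u p + (∑ j, ∑ k, a (p.1, p.2 0) j k * pdxx j k u p)
            - lam * u p) q.1 q.2 ξ‖ ^ 2 := by
  have hX : 0 ≤ ∑ j, ξ j ^ 2 := Finset.sum_nonneg fun j _ => sq_nonneg _
  have estimate := integral_parabolic_estimate hδ (μ := δ * ∑ j, ξ j ^ 2 + lam)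
    (a := fun q => a q 0 0) (b := fun q => mixedCoeff (a q) ξ)
    (c := fun q => transverseForm (a q) ξ + lam)
    (add_nonneg (mul_nonneg hδ.1.le hX) hlam) (ha 0 0)
    (by unfold mixedCoeff; fun_prop) (by unfold transverseForm; fun_prop)
    (fun q => coeffBounds_of_elliptic hδ hlam (helliptic q))
    (contDiff_fourierSlice (ξ := ξ) (m := 2) hu hsupp) (hasCompactSupport_fourierSlice hsupp)
  rw [← fourierSlice_operator hu hsupp] at estimate
  simp only [pFourierT_eq_dirDeriv (hu.of_le one_le_two) hsupp, pFourierXX_eq_dirDeriv hu hsupp,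
    pFourierX_eq_dirDeriv (hu.of_le one_le_two) hsupp]
  have nonneg (v : ℝ × ℝ → ℂ) : 0 ≤ ∫ q, ‖v q‖ ^ 2 := integral_nonneg fun q => sq_nonneg _
  calc _ ≤ _ := add_add_add_le_of_rescaled hδ hX hlam (nonneg _) (nonneg _) (nonneg _) (nonneg _)
    _ ≤ _ := mul_le_mul_of_nonneg_left estimate (sq_nonneg δ⁻¹)
    _ = _ := by
      change _ = _ * ∫ q, ‖fourierSlice ξ _ q‖ ^ 2
      ring

theorem stmt5 (n : ℕ) (hn : 1 ≤ n) (δ : ℝ) (hδ : δ ∈ Set.Ioo (0 : ℝ) 1) :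
    ∃ N : ℝ, 0 < N ∧
      ∀ a : ℝ × ℝ → Fin (n + 1) → Fin (n + 1) → ℝ,
        (∀ j k, ContDiff ℝ (⊤ : ℕ∞) fun q => a q j k) →
        (∀ q j k, a q j k = a q k j) →
        (∀ (q : ℝ × ℝ) (θ : Fin (n + 1) → ℝ),
          δ * ∑ j, (θ j) ^ 2 ≤ ∑ j, ∑ k, a q j k * θ j * θ k ∧
          ∑ j, ∑ k, a q j k * θ j * θ k ≤ δ⁻¹ * ∑ j, (θ j) ^ 2) →
        ∀ u : ℝ × (Fin (n + 1) → ℝ) → ℝ, ContDiff ℝ (⊤ : ℕ∞) u → HasCompactSupport u →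
          ∀ lam : ℝ, 0 ≤ lam →
            ∀ ξ : Fin n → ℝ,
              (∫ q : ℝ × ℝ, ‖pFourierT u q.1 q.2 ξ‖ ^ 2)
                  + (∫ q : ℝ × ℝ, ‖pFourierXX u q.1 q.2 ξ‖ ^ 2)
                  + ((∑ j, (ξ j) ^ 2) ^ 2 + lam ^ 2) *
                      (∫ q : ℝ × ℝ, ‖pFourier u q.1 q.2 ξ‖ ^ 2)
                  + ((∑ j, (ξ j) ^ 2) + lam) *
                      (∫ q : ℝ × ℝ, ‖pFourierX u q.1 q.2 ξ‖ ^ 2)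
                ≤ N * ∫ q : ℝ × ℝ,
                    ‖pFourier (fun p =>
                        pdt u p + (∑ j, ∑ k, a (p.1, p.2 0) j k * pdxx j k u p)
                          - lam * u p) q.1 q.2 ξ‖ ^ 2 := by
  refine ⟨2000 * δ⁻¹ ^ 16, mul_pos (by norm_num) (pow_pos (inv_pos.mpr hδ.1) _), ?_⟩
  intro a ha _ helliptic u hu hsupp lam hlam ξ
  exact stmt5_general hδ (fun j k => (ha j k).continuous.measurable) helliptic
    (contDiff_infty.mp hu 2) hsupp hlam ξ
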